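/- Let N ≥ 2, let Ω ⊆ ℝ^N be a nonempty open connected set, let α, β ≥ 0 and p, q > 0 with pq > 1. Let u, v : ℝ^N → ℝ be twice continuously differentiable on Ω and satisfy the weighted Lane–Emden system Δu(x) + |x|^β |v(x)|^{q−1} v(x) = 0 and Δv(x) + |x|^α |u(x)|^{p−1} u(x) = 0 for all x ∈ Ω. If there exists a nonempty open set ω ⊆ Ω such that u ≡ 0 on ω or v ≡ 0 on ω, then u ≡ 0 and v ≡ 0 on all of Ω. -/

import Mathlib

/-!
The nonlinearities `|v|^{q-1} v` and `|u|^{p-1} u` may be sublinear individually, so the system is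
not a linear one with bounded potentials, and unique continuation rests on `p q > 1`.

Continuation is reduced to a statement across a touching ball: if `u` and `v` vanish on a ball with
`x₀` on its boundary, then `u` vanishes near `x₀` (`LaneEmden.local_step`); exchanging the roles
of the two functions gives the same for `v`. The set where `u` and `v` both vanish locally is then
relatively closed in the connected set `Ω`: otherwise a nearest point of its complement would
contradict the local statement. It meets `ω`, since `u = 0` near `x` forces `|x|^β |v|^{q-1} v = 0`.

After rescaling, `x₀ = 0`, the ball has radius `16` and centre `16 e` with `|e| = 1`, the
functions `U`, `V` are as small as desired on the unit ball, and `|ΔU| ≤ |V|^q`, `|ΔV| ≤ |U|^p`.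
The weight `φ = ⟨e,x⟩ + ⟨e,x⟩²/4 - |x|²/16` (`LaneEmden.wt`) satisfies `φ ≤ -|x|²/64` off the
touching ball. Three estimates carry the local argument.

* `LaneEmden.carleman_L2`: `∫ e^{2τφ} w² ≤ 8 ∫ e^{2τφ} (Δw)²` for `w` supported in the unit ball
  and `τ ≥ 1`, by integration by parts.
* `LaneEmden.carleman_sup`: its version in weighted sup norm, with a loss of at most `e^{D√τ}`. It
  follows from a mean value inequality on balls of radius `1/(2τ)`, where `e^{τφ}` is
  essentially constant (`LaneEmden.mean_value`). Pointwise bounds are what the powers `p`, `q` need.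
* `LaneEmden.cutoff_estimate`: if `|ΔU| ≤ e^{-τ(φ+κ)}` with `κ ≤ 1/256`, then
  `|U| ≤ e^{D√τ} e^{-τ(φ+κ)}`; the cutoff errors sit where `φ ≤ -1/256`.

In `LaneEmden.vanish_of_small` these are iterated: `|U| ≤ e^{-τ(φ+κ)}` gives a bound for `V` with
rate `p τ` and then one for `U` with rate `p q τ`, while `κ` drops only by a multiple of `1/√τ`.
As `p q > 1` the rates grow geometrically, the drops are summable, and starting from a sufficiently
large rate, which is where smallness of `U` enters, `κ` never falls below `1/512`.
Hence `U = 0` where `φ > -1/512`, a neighbourhood of the origin.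
-/

open MeasureTheory Asymptotics Filter Metric Set

noncomputable def laplacian {N : ℕ} (u : EuclideanSpace ℝ (Fin N) → ℝ)
    (x : EuclideanSpace ℝ (Fin N)) : ℝ :=
  ∑ i : Fin N, iteratedFDeriv ℝ 2 u x ![EuclideanSpace.single i 1, EuclideanSpace.single i 1]

noncomputable def laplacianWithin {N : ℕ} (u : EuclideanSpace ℝ (Fin N) → ℝ)
    (s : Set (EuclideanSpace ℝ (Fin N))) (x : EuclideanSpace ℝ (Fin N)) : ℝ :=
  ∑ i : Fin N, iteratedFDerivWithin ℝ 2 u s x ![EuclideanSpace.single i 1, EuclideanSpace.single i 1]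

def VanishesInfOrder {N : ℕ} (w : EuclideanSpace ℝ (Fin N) → ℝ)
    (x₀ : EuclideanSpace ℝ (Fin N)) : Prop :=
  ∃ ε > (0:ℝ), ∀ m > (0:ℝ),
    (fun r : ℝ => ∫ x in ball x₀ r, |w x| ^ ε) =o[nhdsWithin 0 (Ioi 0)] fun r : ℝ => r ^ m

noncomputable def spow (t s : ℝ) : ℝ := Real.sign t * |t| ^ s

noncomputable def distToInt (x : ℝ) : ℝ := min (Int.fract x) (1 - Int.fract x)

def IsRadial {N : ℕ} (u : EuclideanSpace ℝ (Fin N) → ℝ) : Prop :=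
  ∃ U : ℝ → ℝ, ∀ x, u x = U ‖x‖

namespace LaneEmden

open Topology

/-! ### Partial derivatives and the divergence theorem -/

/-- Partial derivative in the `i`-th coordinate direction. -/
noncomputable def pd {N : ℕ} (i : Fin N) (f : EuclideanSpace ℝ (Fin N) → ℝ)
    (x : EuclideanSpace ℝ (Fin N)) : ℝ :=
  fderiv ℝ f x (EuclideanSpace.single i 1)

section Calculus

variable {N : ℕ} {f g : EuclideanSpace ℝ (Fin N) → ℝ} {x : EuclideanSpace ℝ (Fin N)}

lemma pd_add (i : Fin N) (hf : DifferentiableAt ℝ f x) (hg : DifferentiableAt ℝ g x) :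
    pd i (fun y => f y + g y) x = pd i f x + pd i g x := by
  simp [pd, fderiv_fun_add hf hg]

lemma pd_sub (i : Fin N) (hf : DifferentiableAt ℝ f x) (hg : DifferentiableAt ℝ g x) :
    pd i (fun y => f y - g y) x = pd i f x - pd i g x := by
  simp [pd, fderiv_fun_sub hf hg]

lemma pd_mul (i : Fin N) (hf : DifferentiableAt ℝ f x) (hg : DifferentiableAt ℝ g x) :
    pd i (fun y => f y * g y) x = pd i f x * g x + f x * pd i g x := by
  simp [pd, fderiv_fun_mul hf hg]; ring

lemma pd_const (i : Fin N) (c : ℝ) : pd i (fun _ => c) x = 0 := by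
  simp [pd]

lemma pd_const_mul (i : Fin N) (c : ℝ) (hf : DifferentiableAt ℝ f x) :
    pd i (fun y => c * f y) x = c * pd i f x := by
  rw [pd_mul i (by fun_prop) hf, pd_const]; ring

lemma pd_sum {ι : Type*} (s : Finset ι) (i : Fin N) {F : ι → EuclideanSpace ℝ (Fin N) → ℝ}
    (hF : ∀ j ∈ s, DifferentiableAt ℝ (F j) x) :
    pd i (fun y => ∑ j ∈ s, F j y) x = ∑ j ∈ s, pd i (F j) x := by
  simp [pd, fderiv_fun_sum hF]

lemma pd_exp (i : Fin N) (hf : DifferentiableAt ℝ f x) :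
    pd i (fun y => Real.exp (f y)) x = Real.exp (f x) * pd i f x := by
  simp [pd, fderiv_exp hf]

lemma pd_coord (i j : Fin N) : pd i (fun y : EuclideanSpace ℝ (Fin N) => y j) x
    = if j = i then 1 else 0 := by
  have : (fun y : EuclideanSpace ℝ (Fin N) => y j) = EuclideanSpace.proj (𝕜 := ℝ) j := rfl
  rw [pd, this, ContinuousLinearMap.fderiv]
  simp

lemma pd_congr (i : Fin N) (h : f =ᶠ[𝓝 x] g) : pd i f x = pd i g x := by
  rw [pd, pd, h.fderiv_eq]

lemma contDiffAt_pd (i : Fin N) {n m : WithTop ℕ∞} (hf : ContDiffAt ℝ n f x) (hmn : m + 1 ≤ n) :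
    ContDiffAt ℝ m (pd i f) x :=
  (hf.fderiv_right hmn).clm_apply contDiffAt_const

lemma contDiff_pd (i : Fin N) {n m : WithTop ℕ∞} (hf : ContDiff ℝ n f) (hmn : m + 1 ≤ n) :
    ContDiff ℝ m (pd i f) :=
  contDiff_iff_contDiffAt.2 fun _ => contDiffAt_pd i hf.contDiffAt hmn

lemma pd_pd (i j : Fin N) (hf : ContDiffAt ℝ 2 f x) :
    pd i (pd j f) x
      = fderiv ℝ (fderiv ℝ f) x (EuclideanSpace.single i 1) (EuclideanSpace.single j 1) := by
  have hd : DifferentiableAt ℝ (fderiv ℝ f) x :=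
    (hf.fderiv_right (m := 1) (by norm_num)).differentiableAt one_ne_zero
  have : pd j f = fun y => fderiv ℝ f y (EuclideanSpace.single j 1) := rfl
  rw [pd, this, fderiv_clm_apply hd (by fun_prop)]
  simp

lemma pd_comm (i j : Fin N) (hf : ContDiffAt ℝ 2 f x) :
    pd i (pd j f) x = pd j (pd i f) x := by
  rw [pd_pd i j hf, pd_pd j i hf]
  exact (hf.isSymmSndFDerivAt (by simp)) _ _

lemma laplacian_eq_sum_pd (hf : ContDiffAt ℝ 2 f x) :
    laplacian f x = ∑ i, pd i (pd i f) x := by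
  simp only [laplacian, iteratedFDeriv_two_apply]
  exact Finset.sum_congr rfl fun i _ => (pd_pd i i hf).symm

lemma laplacian_congr (h : f =ᶠ[𝓝 x] g) : laplacian f x = laplacian g x := by
  simp only [laplacian, (h.iteratedFDeriv ℝ 2).eq_of_nhds]

lemma pd_eq_zero_of_support (i : Fin N) (hf : ∀ x, 1 < ‖x‖ → f x = 0) (x) (hx : 1 < ‖x‖) :
    pd i f x = 0 := by
  have : f =ᶠ[𝓝 x] fun _ => 0 := by
    filter_upwards [(isOpen_lt continuous_const continuous_norm).mem_nhds hx] with y hy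
    exact hf y hy
  rw [pd_congr i this, pd_const]

lemma integrable_of_support (hc : Continuous f) (hf : ∀ x, 1 < ‖x‖ → f x = 0) :
    Integrable f := by
  refine hc.integrable_of_hasCompactSupport
    (HasCompactSupport.intro (isCompact_closedBall 0 1) fun x hx => hf x ?_)
  simpa using hx

lemma integral_pd_eq_zero (i : Fin N) (hc : ContDiff ℝ 1 f) (hf : ∀ x, 1 < ‖x‖ → f x = 0) :
    ∫ x, pd i f x = 0 := by
  have h := integral_mul_fderiv_eq_neg_fderiv_mul_of_integrable (μ := volume)
    (f := fun _ : EuclideanSpace ℝ (Fin N) => (1 : ℝ)) (g := f)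
    (v := EuclideanSpace.single i 1) (by simp)
    (by
      simp only [one_mul]
      exact integrable_of_support (f := pd i f) (contDiff_pd i (m := 0) hc (by simp)).continuous
        (pd_eq_zero_of_support i hf))
    (by simpa using integrable_of_support hc.continuous hf)
    (by simp) (fun x _ => (hc.differentiable one_ne_zero).differentiableAt)
  simpa [pd] using h

/-- The divergence theorem for a `C¹` vector field supported in the unit ball. -/
lemma integral_div_eq_zero {X : Fin N → EuclideanSpace ℝ (Fin N) → ℝ}
    (hc : ∀ i, ContDiff ℝ 1 (X i)) (hX : ∀ i x, 1 < ‖x‖ → X i x = 0) :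
    Integrable (fun x => ∑ i, pd i (X i) x) ∧ ∫ x, ∑ i, pd i (X i) x = 0 := by
  have hXint : ∀ i, Integrable (pd i (X i)) := fun i =>
    integrable_of_support (contDiff_pd i (m := 0) (hc i) (by simp)).continuous
      (pd_eq_zero_of_support i (hX i))
  refine ⟨integrable_finsetSum _ fun i _ => hXint i, ?_⟩
  rw [integral_finsetSum _ fun i _ => hXint i]
  exact Finset.sum_eq_zero fun i _ => integral_pd_eq_zero i (hc i) (hX i)

end Calculus

/-! ### The weight and integration by parts -/

section Weight

variable {N : ℕ} (e : EuclideanSpace ℝ (Fin N))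

/-- The linear form `x ↦ ⟨e, x⟩`, in coordinates. -/
noncomputable def lin (x : EuclideanSpace ℝ (Fin N)) : ℝ := ∑ j, e j * x j

/-- The quadratic Carleman weight `⟨e,x⟩ + ⟨e,x⟩²/4 - |x|²/16`. -/
noncomputable def wt (x : EuclideanSpace ℝ (Fin N)) : ℝ :=
  lin e x + (1 / 4) * (lin e x * lin e x) - (1 / 16) * ∑ j, x j * x j

/-- The `i`-th component of the gradient of `wt e`. -/
noncomputable def dwt (i : Fin N) (x : EuclideanSpace ℝ (Fin N)) : ℝ :=
  (1 + (1 / 2) * lin e x) * e i - (1 / 8) * x i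

@[fun_prop]
lemma contDiff_lin {n : WithTop ℕ∞} : ContDiff ℝ n (lin e) := by
  unfold lin; fun_prop

@[fun_prop]
lemma contDiff_wt {n : WithTop ℕ∞} : ContDiff ℝ n (wt e) := by
  unfold wt; fun_prop

@[fun_prop]
lemma contDiff_dwt {n : WithTop ℕ∞} (i : Fin N) : ContDiff ℝ n (dwt e i) := by
  unfold dwt; fun_prop

lemma differentiable_lin : Differentiable ℝ (lin e) :=
  (contDiff_lin e (n := 1)).differentiable one_ne_zero

lemma differentiable_wt : Differentiable ℝ (wt e) :=
  (contDiff_wt e (n := 1)).differentiable one_ne_zero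

lemma differentiable_dwt (i : Fin N) : Differentiable ℝ (dwt e i) :=
  (contDiff_dwt e (n := 1) i).differentiable one_ne_zero

lemma pd_lin (i : Fin N) (x) : pd i (lin e) x = e i := by
  have h2 : ∀ j : Fin N, DifferentiableAt ℝ (fun y : EuclideanSpace ℝ (Fin N) => y j) x := by
    intro j; fun_prop
  unfold lin
  rw [pd_sum _ _ fun j _ => by fun_prop]
  simp_rw [pd_const_mul i _ (h2 _), pd_coord]
  simp

lemma pd_wt (i : Fin N) (x) : pd i (wt e) x = dwt e i x := by
  have h1 := (differentiable_lin e) x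
  have h2 : ∀ j : Fin N, DifferentiableAt ℝ (fun y : EuclideanSpace ℝ (Fin N) => y j) x := by
    intro j; fun_prop
  unfold wt
  rw [pd_sub i (by fun_prop) (by fun_prop), pd_add i (by fun_prop) (by fun_prop),
    pd_const_mul i _ (by fun_prop), pd_const_mul i _ (by fun_prop), pd_mul i h1 h1,
    pd_sum _ _ fun j _ => by fun_prop]
  simp_rw [pd_mul i (h2 _) (h2 _), pd_coord, pd_lin, Finset.sum_add_distrib]
  simp [dwt]; ring

lemma pd_dwt (i j : Fin N) (x) :
    pd i (dwt e j) x = (1 / 2) * (e i * e j) - (1 / 8) * (if j = i then 1 else 0) := by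
  have h1 := (differentiable_lin e) x
  unfold dwt
  rw [pd_sub i (by fun_prop) (by fun_prop), pd_mul i (by fun_prop) (by fun_prop),
    pd_add i (by fun_prop) (by fun_prop), pd_const_mul i _ (by fun_prop),
    pd_const_mul i _ (by fun_prop), pd_coord, pd_const, pd_lin, pd_const]
  ring

end Weight

section Carleman

variable {N : ℕ} {e : EuclideanSpace ℝ (Fin N)} {g : EuclideanSpace ℝ (Fin N) → ℝ}

lemma sum_sq_eq (x : EuclideanSpace ℝ (Fin N)) : ∑ j, x j * x j = ‖x‖ ^ 2 := by
  rw [EuclideanSpace.real_norm_sq_eq]; simp [sq]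

lemma sum_e_dwt (he : ‖e‖ = 1) (x : EuclideanSpace ℝ (Fin N)) :
    ∑ i, e i * dwt e i x = 1 + (3 / 8) * lin e x := by
  have h1 : ∑ j, e j * e j = 1 := by rw [sum_sq_eq, he]; norm_num
  calc ∑ i, e i * dwt e i x
      = (1 + (1 / 2) * lin e x) * (∑ j, e j * e j) - (1 / 8) * (∑ j, e j * x j) := by
        simp only [dwt, Finset.mul_sum, ← Finset.sum_sub_distrib]
        exact Finset.sum_congr rfl fun i _ => by ring
    _ = _ := by rw [h1, ← lin]; ring

lemma sum_dwt_sq (he : ‖e‖ = 1) (x : EuclideanSpace ℝ (Fin N)) :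
    ∑ i, dwt e i x * dwt e i x
      = (1 + (3 / 8) * lin e x) ^ 2 + (‖x‖ ^ 2 - lin e x ^ 2) / 64 := by
  have h1 : ∑ j, e j * e j = 1 := by rw [sum_sq_eq, he]; norm_num
  calc ∑ i, dwt e i x * dwt e i x
      = (1 + (1 / 2) * lin e x) ^ 2 * (∑ j, e j * e j)
        - (1 / 4) * (1 + (1 / 2) * lin e x) * (∑ j, e j * x j) + (1 / 64) * ∑ j, x j * x j := by
        simp only [dwt, Finset.mul_sum, ← Finset.sum_sub_distrib, ← Finset.sum_add_distrib]
        exact Finset.sum_congr rfl fun i _ => by ring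
    _ = _ := by rw [h1, ← lin, sum_sq_eq]; ring

lemma abs_lin_le (he : ‖e‖ = 1) (x : EuclideanSpace ℝ (Fin N)) : |lin e x| ≤ ‖x‖ := by
  have : lin e x = inner ℝ e x := by
    simp [lin, PiLp.inner_apply, mul_comm]
  rw [this]
  simpa [he] using abs_real_inner_le_norm e x

/-- Rellich identity: `Δg (∇φ·∇g) + D²φ(∇g,∇g) - ½ Δφ |∇g|²` is a divergence. -/
lemma ibp_rellich (he : ‖e‖ = 1) (hg : ContDiff ℝ 2 g) (hs : ∀ x, 1 < ‖x‖ → g x = 0) :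
    let h := fun x => (∑ i, pd i (pd i g) x) * (∑ j, dwt e j x * pd j g x)
      + (1 / 2) * (∑ j, e j * pd j g x) ^ 2
      - (1 / 8 + (1 / 2) * (1 / 2 - N / 8)) * ∑ j, pd j g x * pd j g x
    Integrable h ∧ ∫ x, h x = 0 := by
  intro h
  have hgi : ∀ i, ContDiff ℝ 1 (pd i g) := fun i => contDiff_pd i hg (by norm_num)
  have hdi : ∀ i, Differentiable ℝ (pd i g) := fun i => (hgi i).differentiable one_ne_zero
  have hφ := differentiable_dwt e
  have h0 : ∀ i x, 1 < ‖x‖ → pd i g x = 0 := fun i => pd_eq_zero_of_support i hs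
  have h1 : ∑ j, e j * e j = 1 := by rw [sum_sq_eq, he]; norm_num
  let X : Fin N → EuclideanSpace ℝ (Fin N) → ℝ := fun i x =>
    pd i g x * (∑ j, dwt e j x * pd j g x) - (1 / 2) * (dwt e i x * ∑ j, pd j g x * pd j g x)
  have key : ∀ x, ∑ i, pd i (X i) x = h x := by
    intro x
    have e1 : ∀ i, pd i (X i) x = pd i (pd i g) x * (∑ j, dwt e j x * pd j g x)
        + pd i g x * (∑ j, (((1 / 2) * (e i * e j) - (1 / 8) * (if j = i then 1 else 0)) * pd j g x
            + dwt e j x * pd i (pd j g) x))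
        - (1 / 2) * (((1 / 2) * (e i * e i) - 1 / 8) * (∑ j, pd j g x * pd j g x)
          + dwt e i x * ∑ j, 2 * (pd j g x * pd i (pd j g) x)) := by
      intro i
      simp only [X]
      rw [pd_sub i (by fun_prop) (by fun_prop), pd_mul i (by fun_prop) (by fun_prop),
        pd_const_mul i _ (by fun_prop), pd_mul i (by fun_prop) (by fun_prop),
        pd_sum _ _ fun j _ => by fun_prop, pd_sum _ _ fun j _ => by fun_prop]
      simp_rw [pd_mul i (hφ _ x) (hdi _ x), pd_mul i (hdi _ x) (hdi _ x), pd_dwt]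
      simp only [if_true]
      congr 4
      · ring
      · exact Finset.sum_congr rfl fun j _ => by ring
    have e2 : ∀ i, pd i (X i) x = pd i (pd i g) x * (∑ j, dwt e j x * pd j g x)
        + ((1 / 2) * (e i * pd i g x) * (∑ j, e j * pd j g x) - (1 / 8) * (pd i g x * pd i g x))
        - (1 / 2) * ((1 / 2) * (e i * e i) - 1 / 8) * (∑ j, pd j g x * pd j g x)
        + ((∑ j, pd i g x * (dwt e j x * pd i (pd j g) x))
          - ∑ j, dwt e i x * (pd j g x * pd i (pd j g) x)) := by
      intro i
      rw [e1 i, Finset.sum_add_distrib, ← Finset.mul_sum, ← Finset.mul_sum, ← Finset.mul_sum]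
      have : ∑ j, ((1 / 2) * (e i * e j) - (1 / 8) * (if j = i then 1 else 0)) * pd j g x
          = (1 / 2) * e i * (∑ j, e j * pd j g x) - (1 / 8) * pd i g x := by
        simp only [sub_mul, Finset.sum_sub_distrib, Finset.mul_sum]
        simp
        exact Finset.sum_congr rfl fun j _ => by ring
      rw [this]; ring
    -- the two double sums cancel because second derivatives commute
    have e3 : ∑ i, ∑ j, pd i g x * (dwt e j x * pd i (pd j g) x)
        = ∑ i, ∑ j, dwt e i x * (pd j g x * pd i (pd j g) x) := by
      rw [Finset.sum_comm]
      refine Finset.sum_congr rfl fun i _ => Finset.sum_congr rfl fun j _ => ?_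
      rw [pd_comm j i hg.contDiffAt]; ring
    simp_rw [e2, Finset.sum_add_distrib, Finset.sum_sub_distrib, e3, Finset.sum_add_distrib,
      Finset.sum_sub_distrib, ← Finset.sum_mul, ← Finset.mul_sum, Finset.sum_sub_distrib,
      ← Finset.mul_sum, h1]
    simp [h]
    ring
  have := integral_div_eq_zero (X := X) (fun i => by fun_prop)
    (fun i x hx => by simp [X, h0 _ x hx])
  simpa only [key] using this

/-- `|∇g|² + g Δg` is a divergence. -/
lemma ibp_grad (hg : ContDiff ℝ 2 g) (hs : ∀ x, 1 < ‖x‖ → g x = 0) :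
    let h := fun x => (∑ j, pd j g x * pd j g x) + g x * ∑ i, pd i (pd i g) x
    Integrable h ∧ ∫ x, h x = 0 := by
  intro h
  have hgi : ∀ i, ContDiff ℝ 1 (pd i g) := fun i => contDiff_pd i hg (by norm_num)
  have hdi : ∀ i, Differentiable ℝ (pd i g) := fun i => (hgi i).differentiable one_ne_zero
  have hd : Differentiable ℝ g := hg.differentiable two_ne_zero
  have hg1 : ContDiff ℝ 1 g := hg.of_le (by norm_num)
  let X : Fin N → EuclideanSpace ℝ (Fin N) → ℝ := fun i x => g x * pd i g x
  have key : ∀ x, ∑ i, pd i (X i) x = h x := by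
    intro x
    simp_rw [X, pd_mul _ (hd x) (hdi _ x), h, Finset.sum_add_distrib, Finset.mul_sum]
  have := integral_div_eq_zero (X := X) (fun i => by fun_prop)
    (fun i x hx => by simp [X, hs x hx])
  simpa only [key] using this

/-- The divergence of `g² |∇φ|² ∇φ`. -/
lemma ibp_cubic (he : ‖e‖ = 1) (hg : ContDiff ℝ 2 g) (hs : ∀ x, 1 < ‖x‖ → g x = 0) :
    let h := fun x => 2 * (∑ i, dwt e i x * dwt e i x) * g x * (∑ j, dwt e j x * pd j g x)
      + ((∑ i, e i * dwt e i x) ^ 2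
        + ((1 / 2 - N / 8) - 1 / 4) * (∑ i, dwt e i x * dwt e i x)) * g x ^ 2
    Integrable h ∧ ∫ x, h x = 0 := by
  intro h
  have hd : Differentiable ℝ g := hg.differentiable two_ne_zero
  have hg1 : ContDiff ℝ 1 g := hg.of_le (by norm_num)
  have hφ := differentiable_dwt e
  have h1 : ∑ j, e j * e j = 1 := by rw [sum_sq_eq, he]; norm_num
  let X : Fin N → EuclideanSpace ℝ (Fin N) → ℝ := fun i x =>
    (∑ j, dwt e j x * dwt e j x) * (dwt e i x * (g x * g x))
  have key : ∀ x, ∑ i, pd i (X i) x = h x := by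
    intro x
    have e1 : ∀ i, pd i (X i) x
        = (e i * dwt e i x * (∑ j, e j * dwt e j x) - (1 / 4) * (dwt e i x * dwt e i x)) * g x ^ 2
          + (∑ j, dwt e j x * dwt e j x) * (((1 / 2) * (e i * e i) - 1 / 8) * g x ^ 2)
          + (∑ j, dwt e j x * dwt e j x) * (2 * g x * (dwt e i x * pd i g x)) := by
      intro i
      simp only [X]
      rw [pd_mul i (by fun_prop) (by fun_prop), pd_mul i (by fun_prop) (by fun_prop),
        pd_mul i (by fun_prop) (by fun_prop), pd_sum _ _ fun j _ => by fun_prop]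
      simp_rw [pd_mul i (hφ _ x) (hφ _ x), pd_dwt]
      have : ∑ j, (((1 / 2) * (e i * e j) - (1 / 8) * (if j = i then 1 else 0)) * dwt e j x
          + dwt e j x * ((1 / 2) * (e i * e j) - (1 / 8) * (if j = i then 1 else 0)))
          = e i * (∑ j, e j * dwt e j x) - (1 / 4) * dwt e i x := by
        have : ∀ j, (((1 / 2) * (e i * e j) - (1 / 8) * (if j = i then 1 else 0)) * dwt e j x
          + dwt e j x * ((1 / 2) * (e i * e j) - (1 / 8) * (if j = i then 1 else 0)))
          = e i * (e j * dwt e j x) - (1 / 4) * ((if j = i then 1 else 0) * dwt e j x) :=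
          fun j => by ring
        simp_rw [this, Finset.sum_sub_distrib, ← Finset.mul_sum]
        simp
      rw [this]
      simp only [if_true]
      ring
    simp_rw [e1, Finset.sum_add_distrib, ← Finset.mul_sum, ← Finset.sum_mul,
      Finset.sum_sub_distrib, ← Finset.mul_sum, ← Finset.sum_mul, h1]
    simp [h]
    ring
  have := integral_div_eq_zero (X := X) (fun i => by fun_prop)
    (fun i x hx => by simp [X, hs x hx])
  simpa only [key] using this

/-- The divergence of `g² ∇φ`. -/
lemma ibp_linear (he : ‖e‖ = 1) (hg : ContDiff ℝ 2 g) (hs : ∀ x, 1 < ‖x‖ → g x = 0) :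
    let h := fun x => 2 * g x * (∑ j, dwt e j x * pd j g x) + (1 / 2 - N / 8) * g x ^ 2
    Integrable h ∧ ∫ x, h x = 0 := by
  intro h
  have hd : Differentiable ℝ g := hg.differentiable two_ne_zero
  have hg1 : ContDiff ℝ 1 g := hg.of_le (by norm_num)
  have hφ := differentiable_dwt e
  have h1 : ∑ j, e j * e j = 1 := by rw [sum_sq_eq, he]; norm_num
  let X : Fin N → EuclideanSpace ℝ (Fin N) → ℝ := fun i x => dwt e i x * (g x * g x)
  have key : ∀ x, ∑ i, pd i (X i) x = h x := by
    intro x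
    have e1 : ∀ i, pd i (X i) x
        = ((1 / 2) * (e i * e i) - 1 / 8) * g x ^ 2 + 2 * g x * (dwt e i x * pd i g x) := by
      intro i
      simp only [X]
      rw [pd_mul i (by fun_prop) (by fun_prop), pd_mul i (by fun_prop) (by fun_prop), pd_dwt]
      simp only [if_true]
      ring
    simp_rw [e1, Finset.sum_add_distrib, ← Finset.mul_sum, ← Finset.sum_mul,
      Finset.sum_sub_distrib, ← Finset.mul_sum, h1]
    simp [h]
    ring
  have := integral_div_eq_zero (X := X) (fun i => by fun_prop)
    (fun i x hx => by simp [X, hs x hx])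
  simpa only [key] using this

end Carleman

/-! ### The Carleman inequality in `L²` -/

section CarlemanL2

variable {N : ℕ} {e : EuclideanSpace ℝ (Fin N)}

/-- The `L²` Carleman inequality for the conjugated operator
`g ↦ Δg - 2τ ∇φ·∇g + τ²|∇φ|² g - τ Δφ g`, obtained by pairing it with its antisymmetric part
corrected by `-τ g / 4`. -/
lemma carleman_conj {g : EuclideanSpace ℝ (Fin N) → ℝ} (he : ‖e‖ = 1) (hg : ContDiff ℝ 2 g)
    (hs : ∀ x, 1 < ‖x‖ → g x = 0) {τ : ℝ} (hτ : 1 ≤ τ) :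
    ∫ x, g x ^ 2 ≤ 8 * ∫ x, ((∑ i, pd i (pd i g) x) - 2 * τ * (∑ j, dwt e j x * pd j g x)
      + τ ^ 2 * (∑ i, dwt e i x * dwt e i x) * g x - τ * (1 / 2 - N / 8) * g x) ^ 2 := by
  have hgi : ∀ i, ContDiff ℝ 1 (pd i g) := fun i => contDiff_pd i hg (by norm_num)
  have hgii : ∀ i, Continuous (pd i (pd i g)) := fun i =>
    (contDiff_pd i (m := 0) (hgi i) (by norm_num)).continuous
  have hgc : Continuous g := hg.continuous
  have hgic : ∀ i, Continuous (pd i g) := fun i => (hgi i).continuous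
  have hφc : ∀ i, Continuous (dwt e i) := fun i => (contDiff_dwt e (n := 0) i).continuous
  have h0 : ∀ i x, 1 < ‖x‖ → pd i g x = 0 := fun i => pd_eq_zero_of_support i hs
  have h00 : ∀ i x, 1 < ‖x‖ → pd i (pd i g) x = 0 := fun i => pd_eq_zero_of_support i (h0 i)
  obtain ⟨i1, z1⟩ := ibp_rellich he hg hs
  obtain ⟨i2, z2⟩ := ibp_grad hg hs
  obtain ⟨i3, z3⟩ := ibp_cubic he hg hs
  obtain ⟨i4, z4⟩ := ibp_linear he hg hs
  set h1 := fun x => (∑ i, pd i (pd i g) x) * (∑ j, dwt e j x * pd j g x)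
      + (1 / 2) * (∑ j, e j * pd j g x) ^ 2
      - (1 / 8 + (1 / 2) * (1 / 2 - N / 8)) * ∑ j, pd j g x * pd j g x with h1def
  set h2 := fun x => (∑ j, pd j g x * pd j g x) + g x * ∑ i, pd i (pd i g) x with h2def
  set h3 := fun x => 2 * (∑ i, dwt e i x * dwt e i x) * g x * (∑ j, dwt e j x * pd j g x)
      + ((∑ i, e i * dwt e i x) ^ 2
        + ((1 / 2 - N / 8) - 1 / 4) * (∑ i, dwt e i x * dwt e i x)) * g x ^ 2 with h3def
  set h4 := fun x => 2 * g x * (∑ j, dwt e j x * pd j g x) + (1 / 2 - N / 8) * g x ^ 2 with h4def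
  set L := fun x => (∑ i, pd i (pd i g) x) - 2 * τ * (∑ j, dwt e j x * pd j g x)
      + τ ^ 2 * (∑ i, dwt e i x * dwt e i x) * g x - τ * (1 / 2 - N / 8) * g x with hL
  have iL : Integrable fun x => L x ^ 2 :=
    integrable_of_support (by fun_prop) fun x hx => by simp [hL, hs x hx, h0 _ x hx, h00 _ x hx]
  have ig : Integrable fun x => g x ^ 2 :=
    integrable_of_support (by fun_prop) fun x hx => by simp [hs x hx]
  -- the pointwise inequality behind the estimate: up to divergences, `g²` is controlled by `L²`
  have pt : ∀ x, (10 / 64) * g x ^ 2 ≤ (5 / 4) * L x ^ 2 - ((-2 * τ) * h1 x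
      + (-τ * ((1 / 2 - N / 8) + 1 / 4)) * h2 x + (-τ ^ 3) * h3 x + (τ ^ 2 / 4) * h4 x) := by
    intro x
    rcases lt_or_ge 1 ‖x‖ with hx | hx
    · simp [hL, h1def, h2def, h3def, h4def, hs x hx, h0 _ x hx, h00 _ x hx]
    have hQ : 12 / 64 ≤ (∑ i, e i * dwt e i x) ^ 2 - (1 / 2) * ∑ i, dwt e i x * dwt e i x := by
      rw [sum_e_dwt he, sum_dwt_sq he]
      have := abs_le.1 ((abs_lin_le he x).trans hx)
      nlinarith [norm_nonneg x, sq_nonneg (lin e x)]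
    simp only [hL, h1def, h2def, h3def, h4def]
    generalize (∑ i, e i * dwt e i x) = m at *
    generalize (∑ i, dwt e i x * dwt e i x) = G at *
    generalize (∑ i, pd i (pd i g) x) = Lap
    generalize (∑ j, dwt e j x * pd j g x) = P
    generalize (∑ j, pd j g x * pd j g x) = T
    generalize (∑ j, e j * pd j g x) = R
    generalize g x = y
    generalize (1 / 2 - (N : ℝ) / 8) = D
    have hq : (10 / 64) * y ^ 2 ≤ (τ ^ 3 * (m ^ 2 - (1 / 2) * G) - τ ^ 2 / 64) * y ^ 2 := by
      apply mul_le_mul_of_nonneg_right _ (sq_nonneg y)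
      have h3 : 1 ≤ τ ^ 2 := one_le_pow₀ hτ
      have h4 : τ ^ 2 ≤ τ ^ 3 := pow_le_pow_right₀ hτ (by norm_num)
      nlinarith [mul_le_mul_of_nonneg_left hQ (by positivity : 0 ≤ τ ^ 3)]
    set A := -2 * τ * P - τ * D * y with hA
    set LL := Lap - 2 * τ * P + τ ^ 2 * G * y - τ * D * y with hLL
    have hid : LL * (A - τ / 4 * y) = A ^ 2 + τ * R ^ 2 + τ ^ 3 * (m ^ 2 - (1 / 2) * G) * y ^ 2 +
      (-2 * τ * (Lap * P + 1 / 2 * R ^ 2 - (1 / 8 + 1 / 2 * D) * T)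
      + -τ * (D + 1 / 4) * (T + y * Lap)
      + -τ ^ 3 * (2 * G * y * P + (m ^ 2 + (D - 1 / 4) * G) * y ^ 2)
      + τ ^ 2 / 4 * (2 * y * P + D * y ^ 2)) := by
      rw [hA, hLL]; ring
    have hR : 0 ≤ τ * R ^ 2 := by positivity
    nlinarith [sq_nonneg (LL / 2 - A), sq_nonneg (LL + τ / 8 * y)]
  have j1 := i1.const_mul (-2 * τ)
  have j2 := j1.add (i2.const_mul (-τ * ((1 / 2 - N / 8) + 1 / 4)))
  have j3 := j2.add (i3.const_mul (-τ ^ 3))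
  have j4 := j3.add (i4.const_mul (τ ^ 2 / 4))
  have hi := integral_mono (ig.const_mul (10 / 64)) ((iL.const_mul (5 / 4)).sub j4) pt
  rw [integral_sub' (iL.const_mul (5 / 4)) j4, integral_add' j3 (i4.const_mul (τ ^ 2 / 4)),
    integral_add' j2 (i3.const_mul (-τ ^ 3)),
    integral_add' j1 (i2.const_mul (-τ * ((1 / 2 - N / 8) + 1 / 4)))] at hi
  simp only [integral_const_mul, z1, z2, z3, z4] at hi
  linarith

lemma carleman_L2 {w : EuclideanSpace ℝ (Fin N) → ℝ} (he : ‖e‖ = 1) (hw : ContDiff ℝ 2 w)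
    (hs : ∀ x, 1 < ‖x‖ → w x = 0) {τ : ℝ} (hτ : 1 ≤ τ) :
    ∫ x, (Real.exp (τ * wt e x) * w x) ^ 2
      ≤ 8 * ∫ x, (Real.exp (τ * wt e x) * laplacian w x) ^ 2 := by
  have h1 : ∑ j, e j * e j = 1 := by rw [sum_sq_eq, he]; norm_num
  have hdφ := differentiable_wt e
  have hdφi := differentiable_dwt e
  have hwi : ∀ i, ContDiff ℝ 1 (pd i w) := fun i => contDiff_pd i hw (by norm_num)
  have hdw : Differentiable ℝ w := hw.differentiable two_ne_zero
  have hdwi : ∀ i, Differentiable ℝ (pd i w) := fun i => (hwi i).differentiable one_ne_zero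
  have hg : ContDiff ℝ 2 fun x => Real.exp (τ * wt e x) * w x := by fun_prop
  have hgi : ∀ i, pd i (fun x => Real.exp (τ * wt e x) * w x)
      = fun x => Real.exp (τ * wt e x) * (pd i w x + τ * (dwt e i x * w x)) := by
    intro i; funext x
    rw [pd_mul i (by fun_prop) (by fun_prop), pd_exp i (by fun_prop),
      pd_const_mul i _ (by fun_prop), pd_wt]
    ring
  have hgii : ∀ i x, pd i (pd i (fun x => Real.exp (τ * wt e x) * w x)) x
      = Real.exp (τ * wt e x) * (pd i (pd i w) x + 2 * τ * (dwt e i x * pd i w x)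
        + τ * ((1 / 2) * (e i * e i) - 1 / 8) * w x + τ ^ 2 * (dwt e i x * dwt e i x) * w x) := by
    intro i x
    rw [hgi i, pd_mul i (by fun_prop) (by fun_prop), pd_exp i (by fun_prop),
      pd_const_mul i _ (by fun_prop), pd_wt, pd_add i (by fun_prop) (by fun_prop),
      pd_const_mul i _ (by fun_prop), pd_mul i (by fun_prop) (by fun_prop), pd_dwt]
    simp only [if_true]
    ring
  have := carleman_conj he hg (fun x hx => by simp [hs x hx]) hτ
  refine this.trans_eq ?_
  congr 2
  funext x
  congr 1
  rw [laplacian_eq_sum_pd hw.contDiffAt]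
  simp_rw [hgii, hgi]
  have a1 : ∑ j, dwt e j x * (Real.exp (τ * wt e x) * (pd j w x + τ * (dwt e j x * w x)))
      = Real.exp (τ * wt e x) * ((∑ j, dwt e j x * pd j w x)
        + τ * (∑ j, dwt e j x * dwt e j x) * w x) := by
    rw [mul_add, Finset.mul_sum, Finset.mul_sum, Finset.sum_mul, Finset.mul_sum,
      ← Finset.sum_add_distrib]
    exact Finset.sum_congr rfl fun j _ => by ring
  rw [a1, ← Finset.mul_sum]
  simp_rw [Finset.sum_add_distrib, ← Finset.sum_mul, ← Finset.mul_sum, Finset.sum_sub_distrib,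
    ← Finset.mul_sum, h1]
  simp
  ring

end CarlemanL2

/-! ### A mean value inequality -/

section MeanValue

variable {N : ℕ}

lemma hasDerivAt_sq_max (s : ℝ) : HasDerivAt (fun s : ℝ => (max s 0) ^ 2) (2 * max s 0) s := by
  rcases lt_trichotomy s 0 with h | h | h
  · have : (fun s : ℝ => (max s 0) ^ 2) =ᶠ[𝓝 s] fun _ => 0 := by
      filter_upwards [Iio_mem_nhds h] with y hy
      rw [mem_Iio] at hy
      simp [max_eq_right hy.le]
    rw [max_eq_right h.le, mul_zero]
    exact (hasDerivAt_const s (0 : ℝ)).congr_of_eventuallyEq this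
  · subst h
    rw [hasDerivAt_iff_isLittleO_nhds_zero]
    have : (fun h : ℝ => (max (0 + h) 0) ^ 2 - (max 0 0) ^ 2 - h • (2 * max (0 : ℝ) 0))
        =O[𝓝 0] fun h : ℝ => h ^ 2 := by
      refine Asymptotics.IsBigO.of_bound 1 (Eventually.of_forall fun h => ?_)
      simp only [zero_add, max_self, ne_eq, OfNat.ofNat_ne_zero, not_false_eq_true, zero_pow,
        sub_zero, mul_zero, smul_zero, norm_pow, Real.norm_eq_abs, one_mul]
      refine pow_le_pow_left₀ (abs_nonneg _) ?_ 2
      rcases le_total h 0 with h' | h' <;> simp [h']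
    exact this.trans_isLittleO (by simpa using Asymptotics.isLittleO_pow_id (𝕜 := ℝ) one_lt_two)
  · have : (fun s : ℝ => (max s 0) ^ 2) =ᶠ[𝓝 s] fun s => s ^ 2 := by
      filter_upwards [Ioi_mem_nhds h] with y hy
      rw [mem_Ioi] at hy
      simp [max_eq_left hy.le]
    rw [max_eq_left h.le]
    simpa using (hasDerivAt_pow 2 s).congr_of_eventuallyEq this

/-- The compactly supported `C¹` profile `(1 - |z|²)₊²`; its gradient is `-psi z • z`. -/
noncomputable def Phi (z : EuclideanSpace ℝ (Fin N)) : ℝ := (max (1 - ∑ j, z j * z j) 0) ^ 2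

/-- The averaging kernel `4 (1 - |z|²)₊`. -/
noncomputable def psi (z : EuclideanSpace ℝ (Fin N)) : ℝ := 4 * max (1 - ∑ j, z j * z j) 0

lemma contDiff_Phi : ContDiff ℝ 1 (Phi (N := N)) := by
  have h : ContDiff ℝ 1 (fun s : ℝ => (max s 0) ^ 2) := by
    rw [contDiff_one_iff_deriv]
    refine ⟨fun s => (hasDerivAt_sq_max s).differentiableAt, ?_⟩
    rw [show deriv (fun s : ℝ => (max s 0) ^ 2) = fun s => 2 * max s 0 from
      funext fun s => (hasDerivAt_sq_max s).deriv]
    fun_prop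
  exact h.comp (g := fun s : ℝ => (max s 0) ^ 2)
    (f := fun z : EuclideanSpace ℝ (Fin N) => 1 - ∑ j, z j * z j) (by fun_prop)

lemma pd_Phi (i : Fin N) (z) : pd i Phi z = -(psi z * z i) := by
  have h2 : ∀ j : Fin N, DifferentiableAt ℝ (fun y : EuclideanSpace ℝ (Fin N) => y j) z := by
    intro j; fun_prop
  have hq : DifferentiableAt ℝ (fun z : EuclideanSpace ℝ (Fin N) => 1 - ∑ j, z j * z j) z := by
    fun_prop
  have h1 : pd i (fun z : EuclideanSpace ℝ (Fin N) => 1 - ∑ j, z j * z j) z = -(2 * z i) := by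
    rw [pd_sub i (by fun_prop) (by fun_prop), pd_const, pd_sum _ _ fun j _ => by fun_prop]
    simp_rw [pd_mul i (h2 _) (h2 _), pd_coord, Finset.sum_add_distrib]
    simp; ring
  have := (hasDerivAt_sq_max (1 - ∑ j, z j * z j)).comp_hasFDerivAt z hq.hasFDerivAt
  have h3 : pd i Phi z = (2 * max (1 - ∑ j, z j * z j) 0)
      * pd i (fun z : EuclideanSpace ℝ (Fin N) => 1 - ∑ j, z j * z j) z := by
    rw [pd, show (Phi : EuclideanSpace ℝ (Fin N) → ℝ) = (fun s : ℝ => (max s 0) ^ 2) ∘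
      (fun z : EuclideanSpace ℝ (Fin N) => 1 - ∑ j, z j * z j) from rfl, this.fderiv]
    simp [pd]
  rw [h3, h1, psi]; ring

lemma continuous_psi : Continuous (psi (N := N)) := by unfold psi; fun_prop

lemma psi_nonneg (z : EuclideanSpace ℝ (Fin N)) : 0 ≤ psi z := by unfold psi; positivity

lemma Phi_nonneg (z : EuclideanSpace ℝ (Fin N)) : 0 ≤ Phi z := by unfold Phi; positivity

lemma max_eq_zero_of_norm {z : EuclideanSpace ℝ (Fin N)} (hz : 1 < ‖z‖) :
    max (1 - ∑ j, z j * z j) 0 = 0 := by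
  rw [sum_sq_eq, max_eq_right]; nlinarith

lemma psi_support (z : EuclideanSpace ℝ (Fin N)) (hz : 1 < ‖z‖) : psi z = 0 := by
  rw [psi, max_eq_zero_of_norm hz, mul_zero]

lemma Phi_support (z : EuclideanSpace ℝ (Fin N)) (hz : 1 < ‖z‖) : Phi z = 0 := by
  rw [Phi, max_eq_zero_of_norm hz]; norm_num

lemma integral_psi_pos : 0 < ∫ z, psi (N := N) z := by
  refine continuous_psi.integral_pos_of_hasCompactSupport_nonneg_nonzero (x := 0)
    (HasCompactSupport.intro (isCompact_closedBall 0 1) fun x hx => psi_support x ?_)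
    psi_nonneg (by simp [psi])
  simpa using hx

lemma pd_comp_affine (i : Fin N) {f : EuclideanSpace ℝ (Fin N) → ℝ}
    {x z : EuclideanSpace ℝ (Fin N)} {t : ℝ} (hf : DifferentiableAt ℝ f (x + t • z)) :
    pd i (fun z => f (x + t • z)) z = t * pd i f (x + t • z) := by
  have h1 : HasFDerivAt (fun z : EuclideanSpace ℝ (Fin N) => x + t • z)
      (t • ContinuousLinearMap.id ℝ (EuclideanSpace ℝ (Fin N))) z :=
    ((hasFDerivAt_id z).const_smul t).const_add x
  have := hf.hasFDerivAt.comp z h1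
  rw [pd, show (fun z => f (x + t • z)) = f ∘ fun z => x + t • z from rfl, this.fderiv]
  simp [pd]

lemma clm_apply_eq_sum (L : EuclideanSpace ℝ (Fin N) →L[ℝ] ℝ) (z : EuclideanSpace ℝ (Fin N)) :
    L z = ∑ i, z i * L (EuclideanSpace.single i 1) := by
  conv_lhs => rw [← (EuclideanSpace.basisFun (Fin N) ℝ).sum_repr z, map_sum]
  simp

/-- Averages of `w` against the kernel dilated by a factor up to `s` vary by at most a constant
times `s² sup |Δw|`, because their
derivative in the dilation parameter `t` is `t ∫ Phi(z) Δw(x + t z) dz`. -/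
lemma mean_value {w : EuclideanSpace ℝ (Fin N) → ℝ} (hw : ContDiff ℝ 2 w)
    (hs : ∀ x, 1 < ‖x‖ → w x = 0) (x : EuclideanSpace ℝ (Fin N)) {s M : ℝ} (hs0 : 0 < s)
    (hLap : ∀ y, ‖y - x‖ ≤ s → |laplacian w y| ≤ M) :
    |w x| * (∫ z, psi (N := N) z) ≤ (∫ z, psi z * |w (x + s • z)|)
      + s ^ 2 * M * ∫ z, Phi (N := N) z := by
  have hwi : ∀ i, ContDiff ℝ 1 (pd i w) := fun i => contDiff_pd i hw (by norm_num)
  have hdi : ∀ i, Differentiable ℝ (pd i w) := fun i => (hwi i).differentiable one_ne_zero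
  have hd : Differentiable ℝ w := hw.differentiable two_ne_zero
  have hwc := hw.continuous
  have hψc := continuous_psi (N := N)
  have hΦc := (contDiff_Phi (N := N)).continuous
  have hfd : Continuous (fderiv ℝ w) := hw.continuous_fderiv (by norm_num)
  have hcs : HasCompactSupport w :=
    HasCompactSupport.intro (isCompact_closedBall 0 1) fun x hx => hs x (by simpa using hx)
  obtain ⟨K, hK⟩ := (hcs.fderiv (𝕜 := ℝ)).exists_bound_of_continuous hfd
  have hK0 : 0 ≤ K := (norm_nonneg _).trans (hK 0)
  have hder : ∀ t : ℝ, HasDerivAt (fun t => ∫ z, psi z * w (x + t • z))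
      (∫ z, psi z * fderiv ℝ w (x + t • z) z) t := by
    intro t
    refine (hasDerivAt_integral_of_dominated_loc_of_deriv_le (μ := volume)
      (F := fun t z => psi z * w (x + t • z))
      (F' := fun t z => psi z * fderiv ℝ w (x + t • z) z)
      (bound := fun z => psi z * K) (s := univ) univ_mem ?_ ?_ ?_ ?_ ?_ ?_).2
    · exact Eventually.of_forall fun t => (by fun_prop :
        Continuous fun z => psi z * w (x + t • z)).aestronglyMeasurable
    · exact integrable_of_support (by fun_prop) fun z hz => by simp [psi_support z hz]
    · exact (by fun_prop : Continuous fun z => psi z * fderiv ℝ w (x + t • z) z).aestronglyMeasurable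
    · refine Eventually.of_forall fun z t _ => ?_
      rcases lt_or_ge 1 ‖z‖ with hz | hz
      · simp [psi_support z hz]
      rw [norm_mul, Real.norm_of_nonneg (psi_nonneg z)]
      refine mul_le_mul_of_nonneg_left ?_ (psi_nonneg z)
      calc _ ≤ ‖fderiv ℝ w (x + t • z)‖ * ‖z‖ := ContinuousLinearMap.le_opNorm _ _
        _ ≤ K * 1 := mul_le_mul (hK _) hz (norm_nonneg _) hK0
        _ = K := mul_one K
    · exact integrable_of_support (by fun_prop) fun z hz => by simp [psi_support z hz]
    · refine Eventually.of_forall fun z t _ => ?_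
      have h1 : HasDerivAt (fun t : ℝ => x + t • z) z t := by
        simpa using ((hasDerivAt_id t).smul_const z).const_add x
      exact ((hd (x + t • z)).hasFDerivAt.comp_hasDerivAt t h1).const_mul (psi z)
  have hibp : ∀ t : ℝ, ∫ z, psi z * fderiv ℝ w (x + t • z) z
      = t * ∫ z, Phi z * laplacian w (x + t • z) := by
    intro t
    have hdaff : ∀ i, Differentiable ℝ fun z => pd i w (x + t • z) := fun i =>
      (hdi i).comp (by fun_prop)
    have h := (integral_div_eq_zero (X := fun i z => Phi z * pd i w (x + t • z))
      (fun i => contDiff_Phi.mul ((hwi i).comp (by fun_prop)))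
      (fun i z hz => by simp [Phi_support z hz])).2
    have hpt : ∀ z, ∑ i, pd i (fun z => Phi z * pd i w (x + t • z)) z
        = t * (Phi z * laplacian w (x + t • z)) - psi z * fderiv ℝ w (x + t • z) z := by
      intro z
      have hz : fderiv ℝ w (x + t • z) z = ∑ i, z i * pd i w (x + t • z) := by
        exact clm_apply_eq_sum _ z
      rw [hz, laplacian_eq_sum_pd hw.contDiffAt]
      simp_rw [pd_mul _ ((contDiff_Phi.differentiable one_ne_zero) z) (hdaff _ z), pd_Phi,
        pd_comp_affine _ (hdi _ _), Finset.mul_sum]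
      rw [← Finset.sum_sub_distrib]
      exact Finset.sum_congr rfl fun i _ => by ring
    simp_rw [hpt] at h
    have hlc : Continuous (laplacian w) := by
      rw [show laplacian w = fun y => ∑ i, pd i (pd i w) y from
        funext fun y => laplacian_eq_sum_pd hw.contDiffAt]
      exact continuous_finsetSum _ fun i _ =>
        (contDiff_pd i (m := 0) (hwi i) (by norm_num)).continuous
    rw [integral_sub, integral_const_mul] at h
    · linarith
    · exact integrable_of_support (by fun_prop) fun z hz => by simp [Phi_support z hz]
    · exact integrable_of_support (by fun_prop) fun z hz => by simp [psi_support z hz]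
  have iΦ : Integrable (Phi (N := N)) := integrable_of_support hΦc Phi_support
  have hbd : ∀ t ∈ Icc (0 : ℝ) s, ‖∫ z, psi z * fderiv ℝ w (x + t • z) z‖
      ≤ s * (M * ∫ z, Phi (N := N) z) := by
    intro t ht
    rw [hibp t, norm_mul, Real.norm_of_nonneg ht.1]
    refine mul_le_mul ht.2 ?_ (norm_nonneg _) hs0.le
    rw [← integral_const_mul]
    refine norm_integral_le_of_norm_le (iΦ.const_mul M) (Eventually.of_forall fun z => ?_)
    rcases lt_or_ge 1 ‖z‖ with hz | hz
    · simp [Phi_support z hz]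
    rw [norm_mul, Real.norm_of_nonneg (Phi_nonneg z), mul_comm]
    refine mul_le_mul_of_nonneg_right (hLap _ ?_) (Phi_nonneg z)
    rw [add_sub_cancel_left, norm_smul, Real.norm_of_nonneg ht.1]
    nlinarith [ht.1, ht.2, norm_nonneg z]
  have hmv := (convex_Icc (0 : ℝ) s).norm_image_sub_le_of_norm_hasDerivWithin_le
    (fun t _ => (hder t).hasDerivWithinAt) hbd (left_mem_Icc.2 hs0.le) (right_mem_Icc.2 hs0.le)
  simp only [zero_smul, add_zero, integral_mul_const, sub_zero, Real.norm_eq_abs,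
    abs_of_pos hs0] at hmv
  have h5 : |∫ z, psi z * w (x + s • z)| ≤ ∫ z, psi z * |w (x + s • z)| := by
    refine (abs_integral_le_integral_abs).trans_eq (integral_congr_ae (Eventually.of_forall ?_))
    intro z
    simp [abs_mul, abs_of_nonneg (psi_nonneg z)]
  have h6 : |w x| * (∫ z, psi (N := N) z) = |(∫ z, psi (N := N) z) * w x| := by
    rw [abs_mul, abs_of_pos integral_psi_pos, mul_comm]
  rw [h6]
  have h7 := abs_sub_abs_le_abs_sub ((∫ z, psi (N := N) z) * w x) (∫ z, psi z * w (x + s • z))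
  rw [abs_sub_comm] at h7
  nlinarith

end MeanValue

/-! ### The Carleman inequality in sup norm -/

section CarlemanSup

variable {N : ℕ}

lemma wt_lipschitz {e : EuclideanSpace ℝ (Fin N)} (he : ‖e‖ = 1) {x y : EuclideanSpace ℝ (Fin N)}
    (hx : ‖x‖ ≤ 1) (hy : ‖y - x‖ ≤ 1 / 2) : wt e x - 2 * ‖y - x‖ ≤ wt e y := by
  have hlin : lin e y = lin e x + lin e (y - x) := by
    simp only [lin, ← Finset.sum_add_distrib]
    exact Finset.sum_congr rfl fun j _ => by simp; ring
  have hx' := abs_le.1 ((abs_lin_le he x).trans hx)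
  have h1 := abs_le.1 (abs_lin_le he (y - x))
  have hny : ‖y‖ ≤ ‖x‖ + ‖y - x‖ := by
    simpa using norm_add_le x (y - x)
  unfold wt
  rw [sum_sq_eq, sum_sq_eq, hlin]
  set d := ‖y - x‖
  set a := lin e x
  set b := lin e (y - x)
  have hd : 0 ≤ d := norm_nonneg _
  have hb2 : 0 ≤ b * b := mul_self_nonneg b
  have hy2 : ‖y‖ ^ 2 ≤ ‖x‖ ^ 2 + 2 * d + d / 2 := by
    have : ‖y‖ ^ 2 ≤ (‖x‖ + d) ^ 2 := pow_le_pow_left₀ (norm_nonneg _) hny 2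
    nlinarith [norm_nonneg x]
  have hab : -d ≤ a * b := by
    have : |a * b| ≤ 1 * d := by
      rw [abs_mul]
      exact mul_le_mul (abs_le.2 hx') (abs_le.2 h1) (abs_nonneg _) zero_le_one
    linarith [(abs_le.1 this).1]
  nlinarith

set_option maxHeartbeats 1000000 in
/-- The Carleman estimate in weighted sup norm. The loss is polynomial in `τ`; it is recorded in
the weaker form `exp (D √τ)`. -/
lemma carleman_sup (N : ℕ) : ∃ D : ℝ, 0 < D ∧ ∀ (e : EuclideanSpace ℝ (Fin N)), ‖e‖ = 1 →
    ∀ w : EuclideanSpace ℝ (Fin N) → ℝ, ContDiff ℝ 2 w → (∀ x, 1 < ‖x‖ → w x = 0) →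
    ∀ τ F : ℝ, 1 ≤ τ → 0 < F → (∀ x, |laplacian w x| ≤ F * Real.exp (-(τ * wt e x))) →
    ∀ x, |w x| ≤ F * Real.exp (D * √τ) * Real.exp (-(τ * wt e x)) := by
  set I0 := ∫ z, psi (N := N) z with hI0
  have hI0p : 0 < I0 := integral_psi_pos
  set I1 := ∫ z, Phi (N := N) z with hI1
  have hI1p : 0 ≤ I1 := integral_nonneg Phi_nonneg
  set I2 := ∫ z, psi (N := N) z ^ 2 with hI2
  have hI2p : 0 ≤ I2 := integral_nonneg fun z => sq_nonneg _
  set V := (volume (closedBall (0 : EuclideanSpace ℝ (Fin N)) 1)).toReal with hV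
  have hVp : 0 ≤ V := ENNReal.toReal_nonneg
  set B := Real.exp 1 * (I2 + 2 ^ N * (8 * V) + I1) / I0 with hB
  have hBp : 0 ≤ B := by positivity
  refine ⟨B + 2 * N + 1, by positivity, ?_⟩
  intro e he w hw hs τ F hτ hF hLap x
  have hτ0 : 0 < τ := by linarith
  rcases lt_or_ge 1 ‖x‖ with hx | hx
  · rw [hs x hx, abs_zero]; positivity
  have hwc := hw.continuous
  have hwt : Continuous (wt e) := (contDiff_wt e (n := 0)).continuous
  have hψc := continuous_psi (N := N)
  have hwi : ∀ i, ContDiff ℝ 1 (pd i w) := fun i => contDiff_pd i hw (by norm_num)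
  have hlap0 : ∀ y, 1 < ‖y‖ → laplacian w y = 0 := fun y hy => by
    rw [laplacian_eq_sum_pd hw.contDiffAt]
    exact Finset.sum_eq_zero fun i _ =>
      pd_eq_zero_of_support i (pd_eq_zero_of_support i hs) y hy
  have hlc : Continuous (laplacian w) := by
    rw [show laplacian w = fun y => ∑ i, pd i (pd i w) y from
      funext fun y => laplacian_eq_sum_pd hw.contDiffAt]
    exact continuous_finsetSum _ fun i _ =>
      (contDiff_pd i (m := 0) (hwi i) (by norm_num)).continuous
  -- weighted `L²` bound
  have hL2 : ∫ y, (Real.exp (τ * wt e y) * w y) ^ 2 ≤ 8 * (F ^ 2 * V) := by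
    refine (carleman_L2 he hw hs hτ).trans (mul_le_mul_of_nonneg_left ?_ (by norm_num))
    have hind : ∫ y, (closedBall (0 : EuclideanSpace ℝ (Fin N)) 1).indicator (fun _ => F ^ 2) y
        = F ^ 2 * V := by
      rw [integral_indicator measurableSet_closedBall, setIntegral_const, smul_eq_mul, mul_comm]
      rfl
    rw [← hind]
    refine integral_mono
      (integrable_of_support (by fun_prop) fun y hy => by simp [hlap0 y hy]) ?_ fun y => ?_
    · exact (integrable_indicator_iff measurableSet_closedBall).2
        (integrableOn_const (measure_closedBall_lt_top).ne)
    · rcases lt_or_ge 1 ‖y‖ with hy | hy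
      · rw [indicator_of_notMem (by simpa using hy)]
        simp [hlap0 y hy]
      · rw [indicator_of_mem (by simpa using hy)]
        simp only
        rw [← sq_abs, abs_mul, Real.abs_exp]
        refine pow_le_pow_left₀ (by positivity) ?_ 2
        calc Real.exp (τ * wt e y) * |laplacian w y|
            ≤ Real.exp (τ * wt e y) * (F * Real.exp (-(τ * wt e y))) :=
              mul_le_mul_of_nonneg_left (hLap y) (Real.exp_pos _).le
          _ = F * (Real.exp (τ * wt e y) * Real.exp (-(τ * wt e y))) := by ring
          _ = F := by rw [← Real.exp_add, add_neg_cancel, Real.exp_zero, mul_one]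
  -- on the ball of radius `1/(2τ)` the weight `exp (τ φ)` varies by at most a factor `exp 1`
  set s := 1 / (2 * τ) with hs'
  have hs0 : 0 < s := by positivity
  have hs1 : s ≤ 1 / 2 := by
    rw [hs']; exact one_div_le_one_div_of_le (by norm_num) (by linarith)
  set a := Real.exp (1 - τ * wt e x) with ha
  have ha0 : 0 < a := Real.exp_pos _
  have hosc : ∀ y, ‖y - x‖ ≤ s → Real.exp (-(τ * wt e y)) ≤ a := by
    intro y hy
    rw [ha]
    apply Real.exp_le_exp.2
    have h1 := wt_lipschitz he hx (hy.trans hs1)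
    have h2 : τ * (2 * ‖y - x‖) ≤ 1 := by
      calc τ * (2 * ‖y - x‖) ≤ τ * (2 * s) := by gcongr
        _ = 1 := by rw [hs']; field_simp
    nlinarith [mul_le_mul_of_nonneg_left h1 hτ0.le]
  have hmv := mean_value hw hs x hs0 (M := F * a)
    (fun y hy => (hLap y).trans (mul_le_mul_of_nonneg_left (hosc y hy) hF.le))
  have iw : Integrable fun y => (Real.exp (τ * wt e y) * w y) ^ 2 :=
    integrable_of_support (by fun_prop) fun y hy => by simp [hs y hy]
  have iψ2 : Integrable fun z => psi (N := N) z ^ 2 :=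
    integrable_of_support (by fun_prop) fun y hy => by simp [psi_support y hy]
  have iw' : Integrable fun z => (Real.exp (τ * wt e (x + s • z)) * w (x + s • z)) ^ 2 :=
    (iw.comp_add_left x).comp_smul hs0.ne'
  have hcv : ∫ z, (Real.exp (τ * wt e (x + s • z)) * w (x + s • z)) ^ 2
      = (2 * τ) ^ N * ∫ y, (Real.exp (τ * wt e y) * w y) ^ 2 := by
    have h1 := Measure.integral_comp_smul (volume : Measure (EuclideanSpace ℝ (Fin N)))
      (fun z => (Real.exp (τ * wt e (x + z)) * w (x + z)) ^ 2) s
    have h2 := integral_add_left_eq_self (μ := (volume : Measure (EuclideanSpace ℝ (Fin N))))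
      (fun z => (Real.exp (τ * wt e z) * w z) ^ 2) x
    rw [h1, h2, smul_eq_mul, finrank_euclideanSpace_fin, abs_of_pos (by positivity), hs']
    congr 1
    rw [one_div, inv_pow, inv_inv]
  -- Cauchy–Schwarz in the form `2 ψ h ≤ F ψ² + h² / F`
  have hav : ∫ z, psi z * |w (x + s • z)| ≤ a * F * (I2 + (2 * τ) ^ N * (8 * V)) := by
    have hpt : ∀ z, psi z * |w (x + s • z)| ≤ a * F * psi z ^ 2
        + a / F * (Real.exp (τ * wt e (x + s • z)) * w (x + s • z)) ^ 2 := by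
      intro z
      rcases lt_or_ge 1 ‖z‖ with hz | hz
      · rw [psi_support z hz]; simp only [zero_mul]; positivity
      set y := x + s • z with hy
      have hyx : ‖y - x‖ ≤ s := by
        rw [hy, add_sub_cancel_left, norm_smul, Real.norm_of_nonneg hs0.le]
        nlinarith
      set h := Real.exp (τ * wt e y) * |w y| with hh
      have hh0 : 0 ≤ h := by positivity
      have h1 : |w y| ≤ a * h := by
        calc |w y| = Real.exp (-(τ * wt e y)) * h := by
              rw [hh, ← mul_assoc, ← Real.exp_add, neg_add_cancel, Real.exp_zero, one_mul]
          _ ≤ a * h := mul_le_mul_of_nonneg_right (hosc y hyx) hh0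
      have h2 : (Real.exp (τ * wt e y) * w y) ^ 2 = h ^ 2 := by
        rw [hh, mul_pow, mul_pow, sq_abs]
      rw [h2]
      have h3 : psi z * h ≤ F * psi z ^ 2 + h ^ 2 / F := by
        have : 0 ≤ (F * psi z - h) ^ 2 / F := by positivity
        have h4 : (F * psi z - h) ^ 2 / F = F * psi z ^ 2 - 2 * (psi z * h) + h ^ 2 / F := by
          field_simp
          ring
        nlinarith [mul_nonneg (psi_nonneg z) hh0]
      calc psi z * |w y| ≤ psi z * (a * h) := mul_le_mul_of_nonneg_left h1 (psi_nonneg z)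
        _ = a * (psi z * h) := by ring
        _ ≤ a * (F * psi z ^ 2 + h ^ 2 / F) := mul_le_mul_of_nonneg_left h3 ha0.le
        _ = _ := by ring
    have hi := integral_mono
      (integrable_of_support (by fun_prop) fun z hz => by simp [psi_support z hz])
      ((iψ2.const_mul (a * F)).add (iw'.const_mul (a / F))) hpt
    rw [integral_add' (iψ2.const_mul (a * F)) (iw'.const_mul (a / F)), integral_const_mul,
      integral_const_mul, hcv] at hi
    refine hi.trans ?_
    have : a / F * ((2 * τ) ^ N * ∫ y, (Real.exp (τ * wt e y) * w y) ^ 2)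
        ≤ a / F * ((2 * τ) ^ N * (8 * (F ^ 2 * V))) := by gcongr
    have h5 : a / F * ((2 * τ) ^ N * (8 * (F ^ 2 * V))) = a * F * ((2 * τ) ^ N * (8 * V)) := by
      field_simp
    linarith
  have hτN : 1 ≤ τ ^ N := one_le_pow₀ hτ
  have hmain : |w x| * I0 ≤ a * F * τ ^ N * (I2 + 2 ^ N * (8 * V) + I1) := by
    have h1 : s ^ 2 ≤ 1 := by nlinarith
    have h2 : s ^ 2 * (F * a) * I1 ≤ 1 * (F * a) * I1 := by gcongr
    have h3 : 0 ≤ a * F * I1 := by positivity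
    have h4 : 0 ≤ a * F * I2 := by positivity
    rw [mul_pow] at hav
    nlinarith [mul_le_mul_of_nonneg_right hτN h3, mul_le_mul_of_nonneg_right hτN h4]
  have hB' : |w x| ≤ F * (B * τ ^ N) * Real.exp (-(τ * wt e x)) := by
    rw [← le_div_iff₀ hI0p] at hmain
    refine hmain.trans_eq ?_
    rw [hB, ha, sub_eq_add_neg, Real.exp_add]
    ring
  refine hB'.trans ?_
  gcongr
  have hsq : 1 ≤ √τ := Real.one_le_sqrt.2 hτ
  have h1 : τ ^ N ≤ Real.exp (2 * N * √τ) := by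
    have : √τ ≤ Real.exp √τ := by linarith [Real.add_one_le_exp √τ]
    calc τ ^ N = √τ ^ (2 * N) := by rw [pow_mul, Real.sq_sqrt hτ0.le]
      _ ≤ Real.exp √τ ^ (2 * N) := pow_le_pow_left₀ (by positivity) this _
      _ = Real.exp (2 * N * √τ) := by rw [← Real.exp_nat_mul]; push_cast; rfl
  have h2 : B ≤ Real.exp (B * √τ) := by
    have := Real.add_one_le_exp (B * √τ)
    nlinarith
  calc B * τ ^ N ≤ Real.exp (B * √τ) * Real.exp (2 * N * √τ) := by gcongr
    _ = Real.exp (B * √τ + 2 * N * √τ) := by rw [Real.exp_add]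
    _ ≤ Real.exp ((B + 2 * N + 1) * √τ) := by
        apply Real.exp_le_exp.2
        have h3 : (B + 2 * N + 1) * √τ = B * √τ + 2 * N * √τ + √τ := by ring
        linarith

end CarlemanSup

/-! ### Cutoff -/

section Cutoff

variable {N : ℕ}

/-- Outside the ball of radius `16` centred at `16 e`, which touches the origin, the weight lies
below a negative multiple of `|x|²`. -/
lemma wt_le_of_outside {e x : EuclideanSpace ℝ (Fin N)} (he : ‖e‖ = 1) (hx : ‖x‖ ≤ 1)
    (hxe : 16 ≤ ‖x - (16 : ℝ) • e‖) : wt e x ≤ -(‖x‖ ^ 2 / 64) := by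
  have hlin : lin e x = inner ℝ x ((1 : ℝ) • e) := by
    simp [lin, PiLp.inner_apply]
  have h1 : ‖x - (16 : ℝ) • e‖ ^ 2 = ‖x‖ ^ 2 - 32 * lin e x + 256 := by
    rw [norm_sub_sq_real, hlin, inner_smul_right, inner_smul_right, norm_smul, he]
    norm_num
    ring
  have h2 : (16 : ℝ) ^ 2 ≤ ‖x - (16 : ℝ) • e‖ ^ 2 := pow_le_pow_left₀ (by norm_num) hxe 2
  have h3 := abs_le.1 ((abs_lin_le he x).trans hx)
  have hn : ‖x‖ ^ 2 ≤ 1 := by nlinarith [norm_nonneg x]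
  have hn0 : 0 ≤ ‖x‖ ^ 2 := by positivity
  unfold wt
  rw [sum_sq_eq]
  set t := lin e x
  set n := ‖x‖ ^ 2
  have h4 : 0 ≤ (n / 32 - t) * (1 + (n / 32 + t) / 4) :=
    mul_nonneg (by linarith) (by linarith)
  nlinarith

lemma exists_cutoff (N : ℕ) : ∃ (χ : EuclideanSpace ℝ (Fin N) → ℝ) (K : ℝ), 0 ≤ K ∧
    ContDiff ℝ 2 χ ∧ (∀ x, 0 ≤ χ x) ∧ (∀ x, χ x ≤ 1) ∧ (∀ x, ‖x‖ ≤ 1 / 2 → χ x = 1) ∧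
    (∀ x, 1 ≤ ‖x‖ → χ x = 0) ∧ (∀ i x, |pd i χ x| ≤ K) ∧ (∀ x, |laplacian χ x| ≤ K) := by
  let b : ContDiffBump (0 : EuclideanSpace ℝ (Fin N)) := ⟨1 / 2, 1, by norm_num, by norm_num⟩
  have hb : ContDiff ℝ 2 b := b.contDiff
  have h0 : ∀ x, 1 ≤ ‖x‖ → b x = 0 := fun x hx => b.zero_of_le_dist (by simpa using hx)
  have hbi : ∀ i, ContDiff ℝ 1 (pd i b) := fun i => contDiff_pd i hb (by norm_num)
  have hlap : ∀ x, laplacian b x = ∑ i, pd i (pd i b) x := fun x =>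
    laplacian_eq_sum_pd hb.contDiffAt
  have hlc : Continuous (laplacian b) := by
    rw [show laplacian b = fun y => ∑ i, pd i (pd i b) y from funext hlap]
    exact continuous_finsetSum _ fun i _ =>
      (contDiff_pd i (m := 0) (hbi i) (by norm_num)).continuous
  have hs1 : ∀ x, 1 < ‖x‖ → b x = 0 := fun x hx => h0 x hx.le
  have hbd : ∀ f : EuclideanSpace ℝ (Fin N) → ℝ, Continuous f → (∀ x, 1 < ‖x‖ → f x = 0) →
      ∃ C, ∀ x, |f x| ≤ C := fun f hf hs =>
    HasCompactSupport.exists_bound_of_continuous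
      (HasCompactSupport.intro (isCompact_closedBall 0 1) fun x hx => hs x (by simpa using hx)) hf
  choose K1 hK1 using fun i => hbd (pd i b) (hbi i).continuous (pd_eq_zero_of_support i hs1)
  obtain ⟨K2, hK2⟩ := hbd (laplacian b) hlc fun x hx => by
    rw [hlap]
    exact Finset.sum_eq_zero fun i _ =>
      pd_eq_zero_of_support i (pd_eq_zero_of_support i hs1) x hx
  have hK20 : 0 ≤ K2 := (abs_nonneg _).trans (hK2 0)
  have hK10 : ∀ i, 0 ≤ K1 i := fun i => (abs_nonneg _).trans (hK1 i 0)
  have hsum : 0 ≤ ∑ i, K1 i := Finset.sum_nonneg fun i _ => hK10 i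
  refine ⟨b, K2 + ∑ i, K1 i, by positivity, hb, fun x => b.nonneg, fun x => b.le_one,
    fun x hx => b.one_of_mem_closedBall
      (by rw [mem_closedBall_zero_iff]; exact hx), h0, fun i x => ?_, fun x => ?_⟩
  · have := Finset.single_le_sum (f := K1) (fun i _ => hK10 i) (Finset.mem_univ i)
    linarith [hK1 i x]
  · linarith [hK2 x]

lemma laplacian_zero (x : EuclideanSpace ℝ (Fin N)) :
    laplacian (fun _ : EuclideanSpace ℝ (Fin N) => (0 : ℝ)) x = 0 := by
  rw [laplacian_eq_sum_pd contDiffAt_const]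
  refine Finset.sum_eq_zero fun i _ => ?_
  rw [show pd i (fun _ : EuclideanSpace ℝ (Fin N) => (0 : ℝ)) = fun _ => 0 from
    funext fun y => pd_const i 0, pd_const]

lemma laplacian_mul {f g : EuclideanSpace ℝ (Fin N) → ℝ} {x : EuclideanSpace ℝ (Fin N)}
    (hf : ContDiffAt ℝ 2 f x) (hg : ContDiffAt ℝ 2 g x) :
    laplacian (fun y => f y * g y) x
      = f x * laplacian g x + 2 * (∑ i, pd i f x * pd i g x) + g x * laplacian f x := by
  rw [laplacian_eq_sum_pd (hf.mul hg), laplacian_eq_sum_pd hf, laplacian_eq_sum_pd hg]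
  have h1 : ∀ i, pd i (pd i fun y => f y * g y) x = pd i (pd i f) x * g x
      + 2 * (pd i f x * pd i g x) + f x * pd i (pd i g) x := by
    intro i
    have hev : (pd i fun y => f y * g y) =ᶠ[𝓝 x] fun y => pd i f y * g y + f y * pd i g y := by
      filter_upwards [hf.eventually (by simp), hg.eventually (by simp)] with y hy1 hy2
      exact pd_mul i (hy1.differentiableAt two_ne_zero) (hy2.differentiableAt two_ne_zero)
    have d1 := hf.differentiableAt two_ne_zero
    have d2 := hg.differentiableAt two_ne_zero
    have d3 := (contDiffAt_pd i hf (m := 1) (by norm_num)).differentiableAt one_ne_zero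
    have d4 := (contDiffAt_pd i hg (m := 1) (by norm_num)).differentiableAt one_ne_zero
    rw [pd_congr i hev, pd_add i (by fun_prop) (by fun_prop), pd_mul i d3 d2, pd_mul i d1 d4]
    ring
  simp_rw [h1, Finset.sum_add_distrib, Finset.mul_sum]
  simp_rw [mul_comm (g x)]
  ring

/-- `U` is of class `C²` near the closed unit ball, vanishes on the part inside `|x| < 2` of the
ball of radius `16` centred at `16 e`, and `U` and its first derivatives are at most `S` on the
closed unit ball. -/
structure Adm (e : EuclideanSpace ℝ (Fin N)) (S : ℝ) (U : EuclideanSpace ℝ (Fin N) → ℝ) :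
    Prop where
  contDiffAt : ∀ x, ‖x‖ < 2 → ContDiffAt ℝ 2 U x
  vanish : ∀ x, ‖x‖ < 2 → ‖x - (16 : ℝ) • e‖ < 16 → U x = 0
  bound : ∀ x, ‖x‖ ≤ 1 → |U x| ≤ S
  bound_pd : ∀ x, ‖x‖ ≤ 1 → ∀ i, |pd i U x| ≤ S

/-- The Carleman estimate after a cutoff: the commutator terms live where the weight is below
`-1/256`, so they do no harm as long as the gain `κ` in the decay rate is at most `1/256`. -/
lemma cutoff_estimate (N : ℕ) : ∃ D S : ℝ, 0 < D ∧ 0 < S ∧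
    ∀ (e : EuclideanSpace ℝ (Fin N)) (U : EuclideanSpace ℝ (Fin N) → ℝ), ‖e‖ = 1 → Adm e S U →
    ∀ τ κ : ℝ, 1 ≤ τ → κ ≤ 1 / 256 →
    (∀ x, ‖x‖ ≤ 1 → |laplacian U x| ≤ Real.exp (-(τ * (wt e x + κ)))) →
    ∀ x, ‖x‖ ≤ 1 → |U x| ≤ Real.exp (D * √τ - τ * (wt e x + κ)) := by
  obtain ⟨D, hD, hcar⟩ := carleman_sup N
  obtain ⟨χ, K, hK, hχ, hχ0, hχ1, hχin, hχout, hχpd, hχlap⟩ := exists_cutoff N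
  have hM : 0 < 2 * N * K + K + 1 := by positivity
  set S := 1 / (2 * N * K + K + 1) with hS
  have hS0 : 0 < S := by positivity
  have hSK : 2 * N * K * S + K * S + S = 1 := by rw [hS]; field_simp
  have hS1 : S ≤ 1 := by
    have : 0 ≤ 2 * N * K * S + K * S := by positivity
    linarith
  refine ⟨D + 1, S, by positivity, hS0, ?_⟩
  intro e U he hU τ κ hτ hκ hlap x hx
  have hτ0 : 0 < τ := by linarith
  have hsq : 1 ≤ √τ := Real.one_le_sqrt.2 hτ
  have hfar : ∀ y, 1 / 2 ≤ ‖y‖ → ‖y‖ ≤ 1 → 16 ≤ ‖y - (16 : ℝ) • e‖ →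
      1 ≤ Real.exp (-(τ * (wt e y + κ))) := by
    intro y h1 h2 h3
    have := wt_le_of_outside he h2 h3
    refine Real.one_le_exp ?_
    have h4 : wt e y + κ ≤ 0 := by nlinarith
    nlinarith
  set w : EuclideanSpace ℝ (Fin N) → ℝ := fun y => χ y * U y with hw
  have hw0 : ∀ y, 1 < ‖y‖ → w y = 0 := fun y hy => by simp [hw, hχout y hy.le]
  have hwev : ∀ y, 1 < ‖y‖ → w =ᶠ[𝓝 y] fun _ => 0 := fun y hy => by
    filter_upwards [(isOpen_lt continuous_const continuous_norm).mem_nhds hy] with z hz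
    exact hw0 z hz
  have hwC : ContDiff ℝ 2 w := contDiff_iff_contDiffAt.2 fun y => by
    rcases lt_or_ge 1 ‖y‖ with hy | hy
    · exact contDiffAt_const.congr_of_eventuallyEq (hwev y hy)
    · exact hχ.contDiffAt.mul (hU.contDiffAt y (by linarith))
  have hcrude : ∀ y, ‖y‖ ≤ 1 → |laplacian w y| ≤ |laplacian U y| + 1 := by
    intro y hy
    rw [hw, laplacian_mul hχ.contDiffAt (hU.contDiffAt y (by linarith))]
    have h1 : |χ y * laplacian U y| ≤ |laplacian U y| := by
      rw [abs_mul, abs_of_nonneg (hχ0 y)]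
      exact mul_le_of_le_one_left (abs_nonneg _) (hχ1 y)
    have h2 : |∑ i, pd i χ y * pd i U y| ≤ N * (K * S) := by
      refine (Finset.abs_sum_le_sum_abs _ _).trans ?_
      refine (Finset.sum_le_sum fun i _ => ?_ : _ ≤ ∑ _i : Fin N, K * S).trans (by simp)
      rw [abs_mul]
      exact mul_le_mul (hχpd i y) (hU.bound_pd y hy i) (abs_nonneg _) hK
    have h3 : |U y * laplacian χ y| ≤ S * K := by
      rw [abs_mul]
      exact mul_le_mul (hU.bound y hy) (hχlap y) (abs_nonneg _) hS0.le
    have h4 := abs_add_le (χ y * laplacian U y + 2 * ∑ i, pd i χ y * pd i U y)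
      (U y * laplacian χ y)
    have h5 := abs_add_le (χ y * laplacian U y) (2 * ∑ i, pd i χ y * pd i U y)
    rw [abs_mul 2, abs_two] at h5
    linarith
  have hwlap : ∀ y, |laplacian w y| ≤ 2 * Real.exp (-(τ * κ)) * Real.exp (-(τ * wt e y)) := by
    intro y
    have hexp : 2 * Real.exp (-(τ * κ)) * Real.exp (-(τ * wt e y))
        = 2 * Real.exp (-(τ * (wt e y + κ))) := by
      rw [mul_assoc, ← Real.exp_add]
      congr 2; ring
    rw [hexp]
    rcases lt_or_ge 1 ‖y‖ with hy | hy
    · rw [laplacian_congr (hwev y hy), laplacian_zero, abs_zero]; positivity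
    rcases lt_or_ge ‖y - (16 : ℝ) • e‖ 16 with hye | hye
    · have hev : w =ᶠ[𝓝 y] fun _ => 0 := by
        filter_upwards [(isOpen_lt (f := fun z => ‖z - (16 : ℝ) • e‖) (by fun_prop)
          continuous_const).mem_nhds hye, (isOpen_lt continuous_norm
          (continuous_const (y := (2 : ℝ)))).mem_nhds (show ‖y‖ < 2 by linarith)] with z hz1 hz2
        simp [hw, hU.vanish z hz2 hz1]
      rw [laplacian_congr hev, laplacian_zero, abs_zero]; positivity
    rcases lt_or_ge ‖y‖ (1 / 2) with hy2 | hy2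
    · have hev : w =ᶠ[𝓝 y] U := by
        filter_upwards [(isOpen_lt continuous_norm continuous_const).mem_nhds hy2] with z hz
        simp [hw, hχin z (le_of_lt hz)]
      rw [laplacian_congr hev]
      linarith [hlap y hy, Real.exp_pos (-(τ * (wt e y + κ)))]
    · linarith [hcrude y hy, hlap y hy, hfar y hy2 hy hye]
  rcases lt_or_ge (1 / 2) ‖x‖ with hx2 | hx2
  · rcases lt_or_ge ‖x - (16 : ℝ) • e‖ 16 with hxe | hxe
    · rw [hU.vanish x (by linarith) hxe, abs_zero]; positivity
    · refine ((hU.bound x hx).trans hS1).trans ((hfar x hx2.le hx hxe).trans ?_)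
      apply Real.exp_le_exp.2
      nlinarith
  · have := hcar e he w hwC hw0 τ _ hτ (by positivity) hwlap x
    simp only [hw, hχin x hx2, one_mul] at this
    refine this.trans ?_
    have h2 : (2 : ℝ) ≤ Real.exp √τ := by linarith [Real.add_one_le_exp √τ]
    calc 2 * Real.exp (-(τ * κ)) * Real.exp (D * √τ) * Real.exp (-(τ * wt e x))
        ≤ Real.exp √τ * Real.exp (-(τ * κ)) * Real.exp (D * √τ) * Real.exp (-(τ * wt e x)) := by
          gcongr
      _ = Real.exp ((D + 1) * √τ - τ * (wt e x + κ)) := by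
          rw [← Real.exp_add, ← Real.exp_add, ← Real.exp_add]
          congr 1; ring

end Cutoff

/-! ### Iteration -/

section Iteration

/-- If the nonlinearities have powers `p` and `q` with `p q > 1`, feeding the decay
`exp (-τ (φ + κ))` of `U` through the two estimates multiplies the rate `τ` by `p q`, while the
losses in `κ` are summable. Hence `U` is below every `exp (-τ (φ + 1/512))`, which forces `U = 0`
where `φ > -1/512`. -/
lemma vanish_of_small (N : ℕ) {p q : ℝ} (hp : 0 < p) (hq : 0 < q) (hpq : 1 < p * q) :
    ∃ S : ℝ, 0 < S ∧ ∀ (e : EuclideanSpace ℝ (Fin N)) (U V : EuclideanSpace ℝ (Fin N) → ℝ),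
    ‖e‖ = 1 → Adm e S U → Adm e S V →
    (∀ x, ‖x‖ ≤ 1 → |laplacian U x| ≤ |V x| ^ q) →
    (∀ x, ‖x‖ ≤ 1 → |laplacian V x| ≤ |U x| ^ p) →
    ∀ x, ‖x‖ ≤ 1 → -(1 / 512) < wt e x → U x = 0 := by
  obtain ⟨D, S1, hD, hS1, hest⟩ := cutoff_estimate N
  set r := √(p * q) with hr
  have hr1 : 1 < r := by rw [hr]; exact Real.lt_sqrt_of_sq_lt (by simpa using hpq)
  have hsp : 0 < √p := Real.sqrt_pos.2 hp
  -- `E` balances the two losses `D / √p` and `D / r` against the contraction factor `1 / r`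
  set E := (D / √p + D / r) / (1 - 1 / r) with hE
  have hr' : 0 < 1 - 1 / r := by
    rw [sub_pos, div_lt_one (by linarith)]; exact hr1
  have hE0 : 0 < E := by positivity
  have hEeq : E / r = E - D / √p - D / r := by
    have : E * (1 - 1 / r) = D / √p + D / r := by rw [hE]; exact div_mul_cancel₀ _ hr'.ne'
    have h2 : E * (1 - 1 / r) = E - E / r := by ring
    linarith
  clear_value E
  set τ₀ := max (max 1 (1 / p)) ((512 * E) ^ 2) with hτ₀
  have hτ₀1 : 1 ≤ τ₀ := (le_max_left _ _).trans (le_max_left _ _)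
  have hτ₀p : 1 ≤ p * τ₀ := by
    have : 1 / p ≤ τ₀ := (le_max_right _ _).trans (le_max_left _ _)
    rwa [div_le_iff₀ hp, mul_comm] at this
  have hκ : ∀ τ, τ₀ ≤ τ → 1 / 512 + E / √τ ≤ 1 / 256 := by
    intro τ hτ
    have h1 : 512 * E ≤ √τ := Real.le_sqrt_of_sq_le ((le_max_right _ _).trans hτ)
    have h2 : E / √τ ≤ 1 / 512 := by
      rw [div_le_iff₀ (by linarith)]; linarith
    linarith
  refine ⟨min S1 (Real.exp (-(τ₀ * (1 / 256)))), lt_min hS1 (Real.exp_pos _), ?_⟩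
  intro e U V he hU hV hlapU hlapV x hx hwx
  have mono : ∀ W : EuclideanSpace ℝ (Fin N) → ℝ,
      Adm e (min S1 (Real.exp (-(τ₀ * (1 / 256))))) W → Adm e S1 W := fun W hW =>
    ⟨hW.contDiffAt, hW.vanish, fun x hx => (hW.bound x hx).trans (min_le_left _ _),
      fun x hx i => (hW.bound_pd x hx i).trans (min_le_left _ _)⟩
  have hestU := hest e U he (mono U hU)
  have hestV := hest e V he (mono V hV)
  let H : ℝ → Prop := fun τ => ∀ x, ‖x‖ ≤ 1 →
    |U x| ≤ Real.exp (-(τ * (wt e x + (1 / 512 + E / √τ))))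
  have hstart : H τ₀ := by
    intro x hx
    rcases lt_or_ge ‖x - (16 : ℝ) • e‖ 16 with hxe | hxe
    · rw [hU.vanish x (by linarith) hxe, abs_zero]; positivity
    · refine ((hU.bound x hx).trans (min_le_right _ _)).trans (Real.exp_le_exp.2 ?_)
      have h1 := wt_le_of_outside he hx hxe
      have h2 := hκ τ₀ le_rfl
      have h3 : wt e x + (1 / 512 + E / √τ₀) ≤ 1 / 256 := by nlinarith [sq_nonneg ‖x‖]
      have := mul_le_mul_of_nonneg_left h3 (by linarith : 0 ≤ τ₀)
      linarith
  have hrpow : ∀ a b c : ℝ, 0 < c → |a| ≤ Real.exp b → |a| ^ c ≤ Real.exp (c * b) := by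
    intro a b c hc h
    refine (Real.rpow_le_rpow (abs_nonneg _) h hc.le).trans_eq ?_
    rw [← Real.exp_mul, mul_comm]
  have hstep : ∀ τ, τ₀ ≤ τ → H τ → H (p * q * τ) := by
    intro τ hτ hH
    have hτ1 : 1 ≤ τ := hτ₀1.trans hτ
    have hsτ : 0 < √τ := Real.sqrt_pos.2 (by linarith)
    have hss : √τ * √τ = τ := Real.mul_self_sqrt (by linarith)
    have hpp : √p * √p = p := Real.mul_self_sqrt hp.le
    have hrr : r * r = p * q := Real.mul_self_sqrt (by positivity)
    have hpτ : 1 ≤ p * τ := hτ₀p.trans (mul_le_mul_of_nonneg_left hτ hp.le)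
    set κ := 1 / 512 + E / √τ with hκd
    have e1 : √(p * τ) = √p * √τ := Real.sqrt_mul hp.le _
    have e2 : √(p * q * τ) = r * √τ := Real.sqrt_mul (by positivity) _
    have hVb : ∀ x, ‖x‖ ≤ 1 → |V x| ≤ Real.exp (D * √(p * τ) - p * τ * (wt e x + κ)) :=
      hestV (p * τ) κ hpτ (hκ τ hτ) fun x hx => (hlapV x hx).trans
        ((hrpow _ _ p hp (hH x hx)).trans_eq (by congr 1; ring))
    set κ' := κ - D / (√p * √τ) with hκ'
    have hκ'le : κ' ≤ 1 / 256 := by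
      have : 0 ≤ D / (√p * √τ) := by positivity
      linarith [hκ τ hτ]
    have e3 : D * √(p * τ) = p * τ * (D / (√p * √τ)) := by
      rw [e1]; nth_rewrite 2 [← hpp]; nth_rewrite 2 [← hss]; field_simp
    have hUb := hestU (p * q * τ) κ' (by nlinarith) hκ'le fun x hx => (hlapU x hx).trans
        ((hrpow _ _ q hq (hVb x hx)).trans_eq (by
          rw [e3, hκ']; congr 1; ring))
    intro x hx
    refine (hUb x hx).trans_eq ?_
    congr 1
    have e4 : D * √(p * q * τ) = p * q * τ * (D / (r * √τ)) := by
      rw [e2]; nth_rewrite 1 [← hrr]; nth_rewrite 2 [← hss]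
      have : r ≠ 0 := by linarith
      field_simp
    have e5 : E / √(p * q * τ) = E / √τ - D / (√p * √τ) - D / (r * √τ) := by
      rw [e2]
      calc E / (r * √τ) = E / r / √τ := by rw [div_div]
        _ = _ := by rw [hEeq, sub_div, sub_div, div_div, div_div]
    rw [e4, e5, hκ', hκd]
    ring
  have hall : ∀ k : ℕ, τ₀ ≤ (p * q) ^ k * τ₀ ∧ H ((p * q) ^ k * τ₀) := by
    intro k
    induction k with
    | zero => simpa using hstart
    | succ k ih =>
      rw [pow_succ', mul_assoc]
      refine ⟨?_, hstep _ ih.1 ih.2⟩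
      nlinarith [ih.1]
  have hlim : Tendsto (fun k : ℕ => Real.exp (-((p * q) ^ k * τ₀ * (wt e x + 1 / 512)))) atTop
      (𝓝 0) := by
    refine Real.tendsto_exp_neg_atTop_nhds_zero.comp ?_
    refine Tendsto.atTop_mul_const (by linarith) ?_
    exact (tendsto_pow_atTop_atTop_of_one_lt hpq).atTop_mul_const (by linarith)
  have hle : |U x| ≤ 0 := by
    refine ge_of_tendsto' hlim fun k => ((hall k).2 x hx).trans (Real.exp_le_exp.2 ?_)
    have h1 : 0 ≤ E / √((p * q) ^ k * τ₀) := by positivity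
    have h2 : 0 ≤ (p * q) ^ k * τ₀ := by linarith [(hall k).1]
    nlinarith [mul_nonneg h2 h1]
  exact abs_nonpos_iff.1 hle

end Iteration

/-! ### Continuation across a touching ball -/

section LocalStep

variable {N : ℕ}

lemma laplacian_comp_affine {f : EuclideanSpace ℝ (Fin N) → ℝ} {x z : EuclideanSpace ℝ (Fin N)}
    {t : ℝ} (hf : ContDiffAt ℝ 2 f (x + t • z)) :
    laplacian (fun z => f (x + t • z)) z = t ^ 2 * laplacian f (x + t • z) := by
  have hc : ContDiffAt ℝ 2 (fun z => f (x + t • z)) z :=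
    ContDiffAt.comp z (f := fun z => x + t • z) hf (by fun_prop)
  rw [laplacian_eq_sum_pd hc, laplacian_eq_sum_pd hf, Finset.mul_sum]
  refine Finset.sum_congr rfl fun i _ => ?_
  have hcont : ContinuousAt (fun z : EuclideanSpace ℝ (Fin N) => x + t • z) z := by fun_prop
  have hev : pd i (fun z => f (x + t • z)) =ᶠ[𝓝 z] fun z => t * pd i f (x + t • z) := by
    filter_upwards [hcont.eventually (hf.eventually (by simp))] with y hy
    exact pd_comp_affine i (hy.differentiableAt two_ne_zero)
  have hd : DifferentiableAt ℝ (pd i f) (x + t • z) :=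
    (contDiffAt_pd i hf (m := 1) (by norm_num)).differentiableAt one_ne_zero
  have hd' : DifferentiableAt ℝ (fun z => pd i f (x + t • z)) z :=
    DifferentiableAt.comp z (f := fun z => x + t • z) hd (by fun_prop)
  rw [pd_congr i hev, pd_const_mul i t hd', pd_comp_affine i hd]
  ring

lemma eq_zero_of_touch {u : EuclideanSpace ℝ (Fin N) → ℝ} {x₀ y : EuclideanSpace ℝ (Fin N)}
    (hu : ContinuousAt u x₀) (hy : 0 < ‖y - x₀‖) (hz : ∀ x ∈ ball y ‖y - x₀‖, u x = 0) :
    u x₀ = 0 := by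
  by_contra hne
  have hcl : x₀ ∈ closure (ball y ‖y - x₀‖) := by
    rw [closure_ball y hy.ne', mem_closedBall, dist_comm, dist_eq_norm]
  obtain ⟨x, hx, hx'⟩ := ((mem_closure_iff_frequently.1 hcl).and_eventually
    (hu.eventually_ne hne)).exists
  exact hx' (hz x hx)

/-- If `u` and `v` vanish on a ball with `x₀` on its boundary, then `u` vanishes near `x₀`:
at a small scale around `x₀` the pair is as small, and the touching ball as flat, as
`vanish_of_small` requires. -/
lemma local_step {p q : ℝ} (hp : 0 < p) (hq : 0 < q) (hpq : 1 < p * q)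
    {u v : EuclideanSpace ℝ (Fin N) → ℝ} {x₀ y : EuclideanSpace ℝ (Fin N)} {C : ℝ}
    (hu : ContDiffAt ℝ 2 u x₀) (hv : ContDiffAt ℝ 2 v x₀)
    (hlu : ∀ᶠ x in 𝓝 x₀, |laplacian u x| ≤ C * |v x| ^ q)
    (hlv : ∀ᶠ x in 𝓝 x₀, |laplacian v x| ≤ C * |u x| ^ p)
    (hy : 0 < ‖y - x₀‖) (hzu : ∀ x ∈ ball y ‖y - x₀‖, u x = 0)
    (hzv : ∀ x ∈ ball y ‖y - x₀‖, v x = 0) :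
    ∀ᶠ x in 𝓝 x₀, u x = 0 := by
  obtain ⟨S, hS, hvan⟩ := vanish_of_small N hp hq hpq
  have small : ∀ w : EuclideanSpace ℝ (Fin N) → ℝ, ContDiffAt ℝ 2 w x₀ →
      (∀ x ∈ ball y ‖y - x₀‖, w x = 0) → ∀ᶠ x in 𝓝 x₀, |w x| ≤ S ∧ ContDiffAt ℝ 2 w x ∧
        ∀ i, |pd i w x| ≤ |pd i w x₀| + 1 := by
    intro w hw hz
    have h0 := eq_zero_of_touch hw.continuousAt hy hz
    have h1 : ∀ᶠ x in 𝓝 x₀, |w x| < S :=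
      hw.continuousAt.abs.eventually_lt_const (by simpa [h0] using hS)
    have h2 : ∀ᶠ x in 𝓝 x₀, ∀ i, |pd i w x| < |pd i w x₀| + 1 := by
      refine eventually_all.2 fun i => ?_
      have := (contDiffAt_pd i hw (m := 1) (by norm_num)).continuousAt
      exact this.abs.eventually_lt_const (by linarith)
    filter_upwards [h1, h2, hw.eventually (by simp)] with x a b c
    exact ⟨a.le, c, fun i => (b i).le⟩
  obtain ⟨ε, hε, hball⟩ := Metric.eventually_nhds_iff.1
    ((small u hu hzu).and ((small v hv hzv).and (hlu.and hlv)))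
  set ρ := ‖y - x₀‖ with hρ
  have lim : ∀ c d : ℝ, 0 < d → ∀ᶠ r in 𝓝[>] (0 : ℝ), r * c < d := fun c d hd => by
    have : Tendsto (fun r : ℝ => r * c) (𝓝 0) (𝓝 (0 * c)) := (continuous_mul_const c).tendsto 0
    rw [zero_mul] at this
    exact (this.mono_left nhdsWithin_le_nhds).eventually_lt_const hd
  have hr := (((lim 2 ε hε).and (lim 16 ρ hy)).and ((lim 1 1 one_pos).and (lim C 1 one_pos))).and
    (((eventually_all (ι := Fin N)).2 fun i => lim (|pd i u x₀| + 1) S hS).and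
    (((eventually_all (ι := Fin N)).2 fun i => lim (|pd i v x₀| + 1) S hS).and
      self_mem_nhdsWithin))
  obtain ⟨r, ⟨⟨hr1, hr2⟩, hr3, hr4⟩, hr5, hr6, hr0⟩ := hr.exists
  rw [mul_one] at hr3
  have hrC : r ^ 2 * C ≤ 1 := by nlinarith
  set e := ρ⁻¹ • (y - x₀) with he
  have he1 : ‖e‖ = 1 := by
    rw [he, norm_smul, norm_inv, Real.norm_of_nonneg hy.le, ← hρ, inv_mul_cancel₀ hy.ne']
  have hρe : ρ • e = y - x₀ := by rw [he, smul_smul, mul_inv_cancel₀ hy.ne', one_smul]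
  have hin : ∀ z : EuclideanSpace ℝ (Fin N), ‖z‖ < 2 → dist (x₀ + r • z) x₀ < ε := by
    intro z hz
    rw [dist_eq_norm, add_sub_cancel_left, norm_smul, Real.norm_of_nonneg hr0.le]
    nlinarith
  have hinball : ∀ z : EuclideanSpace ℝ (Fin N), ‖z - (16 : ℝ) • e‖ < 16 →
      x₀ + r • z ∈ ball y ρ := by
    intro z hz
    rw [mem_ball, dist_eq_norm]
    have h1 : x₀ + r • z - y = r • (z - (16 : ℝ) • e) - (ρ - r * 16) • e := by
      rw [sub_smul, hρe, smul_sub, smul_smul]; abel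
    rw [h1]
    refine (norm_sub_le _ _).trans_lt ?_
    rw [norm_smul, norm_smul, he1, Real.norm_of_nonneg hr0.le,
      Real.norm_of_nonneg (by linarith : 0 ≤ ρ - r * 16)]
    nlinarith
  have adm : ∀ w : EuclideanSpace ℝ (Fin N) → ℝ, (∀ x ∈ ball y ρ, w x = 0) →
      (∀ i, r * (|pd i w x₀| + 1) < S) →
      (∀ x, dist x x₀ < ε → |w x| ≤ S ∧ ContDiffAt ℝ 2 w x ∧
        ∀ i, |pd i w x| ≤ |pd i w x₀| + 1) → Adm e S fun z => w (x₀ + r • z) := by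
    intro w hz hrw hw
    refine ⟨fun z hz2 => ?_, fun z _ hz2 => hz _ (hinball z hz2), fun z hz1 => ?_,
      fun z hz1 i => ?_⟩
    · exact ContDiffAt.comp z (f := fun z => x₀ + r • z) (hw _ (hin z hz2)).2.1 (by fun_prop)
    · exact (hw _ (hin z (by linarith))).1
    · have h := hw _ (hin z (by linarith))
      rw [pd_comp_affine i (h.2.1.differentiableAt two_ne_zero), abs_mul, abs_of_pos hr0]
      exact (mul_le_mul_of_nonneg_left (h.2.2 i) hr0.le).trans (hrw i).le
  have hscale : ∀ a b t : ℝ, |a| ≤ C * |b| ^ t → |r ^ 2 * a| ≤ |b| ^ t := by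
    intro a b t h
    rw [abs_mul, abs_of_nonneg (sq_nonneg r)]
    have h0 : 0 ≤ |b| ^ t := by positivity
    calc r ^ 2 * |a| ≤ r ^ 2 * (C * |b| ^ t) := by gcongr
      _ = r ^ 2 * C * |b| ^ t := by ring
      _ ≤ 1 * |b| ^ t := by gcongr
      _ = |b| ^ t := one_mul _
  have key := hvan e (fun z => u (x₀ + r • z)) (fun z => v (x₀ + r • z)) he1
    (adm u hzu hr5 fun x hx => (hball hx).1) (adm v hzv hr6 fun x hx => (hball hx).2.1)
    (fun z hz => by
      have h := hball (hin z (by linarith))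
      rw [laplacian_comp_affine h.1.2.1]
      exact hscale _ _ _ h.2.2.1)
    (fun z hz => by
      have h := hball (hin z (by linarith))
      rw [laplacian_comp_affine h.2.1.2.1]
      exact hscale _ _ _ h.2.2.2)
  have hnear : ∀ᶠ z in 𝓝 (0 : EuclideanSpace ℝ (Fin N)), u (x₀ + r • z) = 0 := by
    have h1 : ∀ᶠ z in 𝓝 (0 : EuclideanSpace ℝ (Fin N)), ‖z‖ < 1 :=
      continuous_norm.continuousAt.eventually_lt_const (by simp)
    have h2 : ∀ᶠ z in 𝓝 (0 : EuclideanSpace ℝ (Fin N)), -(1 / 512) < wt e z :=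
      ((contDiff_wt e (n := 0)).continuous.continuousAt).eventually_const_lt
        (by simp [wt, lin])
    filter_upwards [h1, h2] with z a b
    exact key z a.le b
  have ht : Tendsto (fun x => r⁻¹ • (x - x₀)) (𝓝 x₀) (𝓝 0) := by
    have : Continuous fun x => r⁻¹ • (x - x₀) := by fun_prop
    simpa using this.tendsto x₀
  filter_upwards [ht.eventually hnear] with x hx
  rwa [smul_smul, mul_inv_cancel₀ hr0.ne', one_smul, add_sub_cancel] at hx

end LocalStep

/-! ### Consequences of the system -/

section Continuation

variable {N : ℕ}

lemma abs_spow_le (t s : ℝ) : |spow t s| ≤ |t| ^ s := by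
  rw [spow, abs_mul, abs_of_nonneg (by positivity : 0 ≤ |t| ^ s)]
  refine mul_le_of_le_one_left (by positivity) ?_
  rcases Real.sign_apply_eq t with h | h | h <;> simp [h]

lemma eq_zero_of_spow {t s : ℝ} (h : spow t s = 0) : t = 0 := by
  by_contra ht
  have h1 : |t| ^ s ≠ 0 := (Real.rpow_pos_of_pos (abs_pos.2 ht) s).ne'
  exact (mul_ne_zero (by simpa [Real.sign_eq_zero_iff] using ht) h1) h

lemma laplacian_bound {Ω : Set (EuclideanSpace ℝ (Fin N))} (hΩ : IsOpen Ω) {β q : ℝ}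
    (hβ : 0 ≤ β) {u v : EuclideanSpace ℝ (Fin N) → ℝ}
    (heq : ∀ x ∈ Ω, laplacian u x + ‖x‖ ^ β * spow (v x) q = 0) {x₀} (hx₀ : x₀ ∈ Ω) {C : ℝ}
    (hC : ‖x₀‖ ^ β < C) : ∀ᶠ x in 𝓝 x₀, |laplacian u x| ≤ C * |v x| ^ q := by
  have hc : Continuous fun x : EuclideanSpace ℝ (Fin N) => ‖x‖ ^ β :=
    continuous_norm.rpow_const fun _ => Or.inr hβ
  filter_upwards [hΩ.mem_nhds hx₀, hc.continuousAt.eventually_lt_const hC] with x hx hx'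
  rw [eq_neg_of_add_eq_zero_left (heq x hx), abs_neg, abs_mul,
    abs_of_nonneg (by positivity : 0 ≤ ‖x‖ ^ β)]
  exact mul_le_mul hx'.le (abs_spow_le _ _) (abs_nonneg _)
    ((by positivity : 0 ≤ ‖x‖ ^ β).trans hx'.le)

/-- If `u` vanishes on an open set then so does `v` away from the origin, where the weight
`|x|^β` may be zero. -/
lemma exists_common_zero (hN : 2 ≤ N) {ω : Set (EuclideanSpace ℝ (Fin N))} (hω : IsOpen ω)
    (hne : ω.Nonempty) {β q : ℝ} {u v : EuclideanSpace ℝ (Fin N) → ℝ}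
    (heq : ∀ x ∈ ω, laplacian u x + ‖x‖ ^ β * spow (v x) q = 0) (hu : ∀ x ∈ ω, u x = 0) :
    ∃ x ∈ ω, ∀ᶠ y in 𝓝 x, u y = 0 ∧ v y = 0 := by
  have : Nonempty (Fin N) := ⟨⟨0, by omega⟩⟩
  obtain ⟨a, ha⟩ := hne
  obtain ⟨x, hx, hx0⟩ : ∃ x ∈ ω, x ≠ 0 := by
    by_cases h : a = 0
    · have := Module.punctured_nhds_neBot ℝ (EuclideanSpace ℝ (Fin N)) a
      have h1 : ∀ᶠ x in 𝓝[≠] a, x ∈ ω ∧ x ≠ a :=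
        Filter.Eventually.and (nhdsWithin_le_nhds (hω.mem_nhds ha)) self_mem_nhdsWithin
      obtain ⟨x, hx, hxa⟩ := h1.exists
      exact ⟨x, hx, h ▸ hxa⟩
    · exact ⟨a, ha, h⟩
  refine ⟨x, hx, ?_⟩
  filter_upwards [hω.mem_nhds hx, isOpen_ne.mem_nhds hx0] with y hy hy0
  refine ⟨hu y hy, ?_⟩
  have hlap : laplacian u y = 0 := by
    have : u =ᶠ[𝓝 y] fun _ => 0 := by
      filter_upwards [hω.mem_nhds hy] with z hz
      exact hu z hz
    rw [laplacian_congr this, laplacian_zero]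
  have h := heq y hy
  rw [hlap, zero_add] at h
  exact eq_zero_of_spow ((mul_eq_zero.1 h).resolve_left
    (Real.rpow_pos_of_pos (norm_pos_iff.2 hy0) β).ne')

end Continuation

end LaneEmden

theorem ucp_lane_emden_weak {N : ℕ} (hN : 2 ≤ N) {Ω : Set (EuclideanSpace ℝ (Fin N))}
    (hΩopen : IsOpen Ω) (hΩconn : IsConnected Ω)
    {α β p q : ℝ} (hα : 0 ≤ α) (hβ : 0 ≤ β) (hp : 0 < p) (hq : 0 < q) (hpq : 1 < p * q)
    {u v : EuclideanSpace ℝ (Fin N) → ℝ}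
    (hu : ContDiffOn ℝ 2 u Ω) (hv : ContDiffOn ℝ 2 v Ω)
    (heq1 : ∀ x ∈ Ω, laplacian u x + ‖x‖ ^ β * spow (v x) q = 0)
    (heq2 : ∀ x ∈ Ω, laplacian v x + ‖x‖ ^ α * spow (u x) p = 0)
    {ω : Set (EuclideanSpace ℝ (Fin N))} (hω : IsOpen ω) (hωne : ω.Nonempty) (hωsub : ω ⊆ Ω)
    (hvan : (∀ x ∈ ω, u x = 0) ∨ (∀ x ∈ ω, v x = 0)) :
    ∀ x ∈ Ω, u x = 0 ∧ v x = 0 := by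
  let W : Set (EuclideanSpace ℝ (Fin N)) := {x | ∀ᶠ y in nhds x, u y = 0 ∧ v y = 0}
  have hW : IsOpen W := isOpen_setOfPred_eventually_nhds
  have hWzero : ∀ x ∈ W, u x = 0 ∧ v x = 0 := fun x hx =>
    Filter.Eventually.self_of_nhds (p := fun y => u y = 0 ∧ v y = 0) hx
  have hWne : (Ω ∩ W).Nonempty := by
    rcases hvan with h | h
    · obtain ⟨x, hx, hxW⟩ := LaneEmden.exists_common_zero hN hω hωne
        (fun x hx => heq1 x (hωsub hx)) h
      exact ⟨x, hωsub hx, hxW⟩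
    · obtain ⟨x, hx, hxW⟩ := LaneEmden.exists_common_zero hN hω hωne
        (fun x hx => heq2 x (hωsub hx)) h
      exact ⟨x, hωsub hx, hxW.mono fun y hy => hy.symm⟩
  have hclosed : closure W ∩ Ω ⊆ W := by
    rintro x₁ ⟨hx₁, hx₁Ω⟩
    by_contra hx₁W
    obtain ⟨ε, hε, hball⟩ := Metric.isOpen_iff.1 hΩopen x₁ hx₁Ω
    obtain ⟨y, hyW, hy⟩ := Metric.mem_closure_iff.1 hx₁ (ε / 2) (by positivity)
    -- `x₀` is a point of the complement of `W` nearest to `y`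
    obtain ⟨x₀, hx₀W, hx₀⟩ := hW.isClosed_compl.exists_infDist_eq_dist ⟨x₁, hx₁W⟩ y
    have hyx₀ : dist y x₀ ≤ dist y x₁ := hx₀ ▸ Metric.infDist_le_dist_of_mem hx₁W
    have hx₀Ω : x₀ ∈ Ω := hball (by
      rw [mem_ball]
      linarith [dist_triangle x₀ y x₁, dist_comm x₀ y, dist_comm x₁ y])
    have hzero : ∀ z ∈ ball y ‖y - x₀‖, u z = 0 ∧ v z = 0 := by
      intro z hz
      have hzW : z ∈ W := by
        by_contra h
        have := Metric.infDist_le_dist_of_mem (x := y) (show z ∈ Wᶜ from h)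
        rw [mem_ball, ← dist_eq_norm, ← hx₀, dist_comm] at hz
        linarith
      exact hWzero z hzW
    have hpos : 0 < ‖y - x₀‖ := norm_pos_iff.2 (sub_ne_zero.2 fun h => hx₀W (h ▸ hyW))
    have hux := hu.contDiffAt (hΩopen.mem_nhds hx₀Ω)
    have hvx := hv.contDiffAt (hΩopen.mem_nhds hx₀Ω)
    have hα0 : 0 ≤ ‖x₀‖ ^ α := by positivity
    have hβ0 : 0 ≤ ‖x₀‖ ^ β := by positivity
    have hlu := LaneEmden.laplacian_bound hΩopen hβ heq1 hx₀Ω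
      (C := ‖x₀‖ ^ β + ‖x₀‖ ^ α + 1) (by linarith)
    have hlv := LaneEmden.laplacian_bound hΩopen hα heq2 hx₀Ω
      (C := ‖x₀‖ ^ β + ‖x₀‖ ^ α + 1) (by linarith)
    have h1 := LaneEmden.local_step hp hq hpq hux hvx hlu hlv hpos
      (fun z hz => (hzero z hz).1) fun z hz => (hzero z hz).2
    have h2 := LaneEmden.local_step hq hp (by rwa [mul_comm]) hvx hux hlv hlu hpos
      (fun z hz => (hzero z hz).2) fun z hz => (hzero z hz).1
    exact hx₀W (h1.and h2)
  intro x hx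
  exact hWzero x
    (hΩconn.isPreconnected.subset_of_closure_inter_subset hW hWne hclosed hx)
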